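/- Let x > 0 be real with x not an integer. Then ∑_{n=1}^∞ σ_{1/2}(n) n^{−1/2} e^{−2π√(2nx)} cos(2π√(2nx)) = ( 1/(2π√(2x)) − 1/2 )·ζ(1/2) + π√(2x)·ζ(−1/2) + (x^{3/2}/(π√2)) ∑_{n=1}^∞ σ_{1/2}(n)/(√n·(x² + n²)). -/

import Mathlib

open Complex Finset
open scoped Real BigOperators Classical

/-- Generalized divisor sum `σ_r(n) = ∑_{d ∣ n} d^r` with real exponent. -/
noncomputable def rsigma (r : ℝ) (n : ℕ) : ℝ := ∑ d ∈ n.divisors, (d : ℝ) ^ r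

open MeasureTheory Filter Topology Set in
lemma aux_integral (A B : ℝ) (hA : 0 < A) (hB : 0 ≤ B) :
    IntegrableOn (fun y : ℝ => Real.exp (-A / y - B * y) / (y * √y)) (Ioi 0) ∧
    ∫ y in Ioi (0:ℝ), Real.exp (-A / y - B * y) / (y * √y) =
      √(π / A) * Real.exp (-(2 * √(A * B))) := by
  obtain ⟨a, ha, rfl⟩ : ∃ a : ℝ, 0 < a ∧ A = a ^ 2 :=
    ⟨√A, Real.sqrt_pos.2 hA, (Real.sq_sqrt hA.le).symm⟩
  obtain ⟨b, hb, rfl⟩ : ∃ b : ℝ, 0 ≤ b ∧ B = b ^ 2 :=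
    ⟨√B, Real.sqrt_nonneg B, (Real.sq_sqrt hB).symm⟩
  set G : ℝ → ℝ := fun u => ∫ s in (0:ℝ)..u, Real.exp (-1 * s ^ 2) with hG
  have hGd : ∀ u, HasDerivAt G (Real.exp (-1 * u ^ 2)) u := fun u =>
    (by fun_prop : Continuous fun s : ℝ => Real.exp (-1 * s ^ 2)).integral_hasStrictDerivAt 0 u
      |>.hasDerivAt
  have hG0 : G 0 = 0 := by simp [hG]
  have hGodd : ∀ u, G (-u) = - G u := by
    intro u
    have := intervalIntegral.integral_comp_neg (a := 0) (b := u)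
      (fun s : ℝ => Real.exp (-1 * s ^ 2))
    simp only [neg_zero, even_two.neg_pow] at this
    simp only [hG]
    rw [this, intervalIntegral.integral_symm]
  have hGtop : Tendsto G atTop (𝓝 (√π / 2)) := by
    have h := intervalIntegral_tendsto_integral_Ioi (f := fun s : ℝ => Real.exp (-1 * s ^ 2))
      (μ := volume) 0 (integrable_exp_neg_mul_sq (b := 1) one_pos).integrableOn tendsto_id
    rw [integral_gaussian_Ioi] at h
    simpa [hG] using h
  have hGbot : Tendsto G atBot (𝓝 (-(√π / 2))) := by
    have := (hGtop.comp tendsto_neg_atBot_atTop).neg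
    refine this.congr fun u => ?_
    simp [hGodd]
  have hGc : Continuous G := continuous_iff_continuousAt.2 fun u => (hGd u).continuousAt
  set P0 : ℝ → ℝ := fun y => -(1 / a) * (Real.exp (-(2 * a * b)) * G (a / √y - b * √y)
    + Real.exp (2 * a * b) * G (a / √y + b * √y)) with hP0
  set L0 : ℝ := -(1 / a) * (Real.exp (-(2 * a * b)) * (√π / 2)
    + Real.exp (2 * a * b) * (√π / 2)) with hL0
  set L1 : ℝ := L0 + √π / a * Real.exp (-(2 * a * b)) with hL1
  set P : ℝ → ℝ := Function.update P0 0 L0 with hP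
  have hsq0 : Tendsto (fun y : ℝ => √y) (𝓝[>] 0) (𝓝[>] 0) := by
    refine tendsto_nhdsWithin_iff.2 ⟨?_, ?_⟩
    · have := (Real.continuous_sqrt.tendsto 0).mono_left (nhdsWithin_le_nhds (s := Ioi 0))
      simpa using this
    · filter_upwards [self_mem_nhdsWithin] with y hy
      exact Real.sqrt_pos.2 hy
  have hinv0 : Tendsto (fun y : ℝ => a / √y) (𝓝[>] 0) atTop := by
    have := (tendsto_inv_nhdsGT_zero.comp hsq0).const_mul_atTop ha
    exact this.congr fun y => by simp [div_eq_mul_inv]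
  have hbs0 : Tendsto (fun y : ℝ => b * √y) (𝓝[>] 0) (𝓝 0) := by
    have := (hsq0.mono_right nhdsWithin_le_nhds).const_mul b
    simpa using this
  have hcont : ContinuousWithinAt P (Ici 0) 0 := by
    rw [hP]
    rw [continuousWithinAt_update_same]
    have : (Set.Ici (0:ℝ)) \ {0} = Set.Ioi 0 := by simp
    rw [this]
    have h1 : Tendsto (fun y : ℝ => a / √y - b * √y) (𝓝[>] 0) atTop := by
      simpa [sub_eq_add_neg] using hinv0.atTop_add hbs0.neg
    have h2 : Tendsto (fun y : ℝ => a / √y + b * √y) (𝓝[>] 0) atTop := hinv0.atTop_add hbs0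
    exact (((hGtop.comp h1).const_mul _).add ((hGtop.comp h2).const_mul _)).const_mul _
  have hsqT : Tendsto (fun y : ℝ => √y) atTop atTop := Real.tendsto_sqrt_atTop
  have hinvT : Tendsto (fun y : ℝ => a / √y) atTop (𝓝 0) := hsqT.const_div_atTop a
  have hlim : Tendsto P atTop (𝓝 L1) := by
    have : Tendsto P0 atTop (𝓝 L1) := by
      rcases hb.eq_or_lt with h | h
      · have e : L1 = -(1 / a) * (Real.exp (-(2 * a * b)) * 0 + Real.exp (2 * a * b) * 0) := by
          simp only [hL1, hL0, ← h]; simp; ring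
        rw [e]
        have h1 : Tendsto (fun y : ℝ => G (a / √y - b * √y)) atTop (𝓝 0) := by
          simp only [← h, zero_mul, sub_zero]
          rw [← hG0]; exact (hGc.tendsto 0).comp hinvT
        have h2 : Tendsto (fun y : ℝ => G (a / √y + b * √y)) atTop (𝓝 0) := by
          simp only [← h, zero_mul, add_zero]
          rw [← hG0]; exact (hGc.tendsto 0).comp hinvT
        exact ((h1.const_mul _).add (h2.const_mul _)).const_mul _
      · have e : L1 = -(1 / a) * (Real.exp (-(2 * a * b)) * (-(√π / 2))
            + Real.exp (2 * a * b) * (√π / 2)) := by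
          simp only [hL1, hL0]; ring
        rw [e]
        have hbT := hsqT.const_mul_atTop h
        have h1 : Tendsto (fun y : ℝ => a / √y - b * √y) atTop atBot := by
          simpa [sub_eq_add_neg] using hinvT.add_atBot (tendsto_neg_atTop_atBot.comp hbT)
        have h2 : Tendsto (fun y : ℝ => a / √y + b * √y) atTop atTop := hinvT.add_atTop hbT
        exact (((hGbot.comp h1).const_mul _).add ((hGtop.comp h2).const_mul _)).const_mul _
    refine this.congr' ?_
    filter_upwards [eventually_gt_atTop 0] with y hy
    simp [hP, hy.ne']
  have hderiv : ∀ y ∈ Ioi (0:ℝ), HasDerivAt P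
      (Real.exp (-(a ^ 2) / y - b ^ 2 * y) / (y * √y)) y := by
    intro y hy
    have hy : 0 < y := hy
    have hs : 0 < √y := Real.sqrt_pos.2 hy
    have hs2 : √y ^ 2 = y := Real.sq_sqrt hy.le
    have hd : HasDerivAt (fun y : ℝ => √y) (1 / (2 * √y)) y := Real.hasDerivAt_sqrt hy.ne'
    have d1 : HasDerivAt (fun y : ℝ => a / √y) (-(a * (1 / (2 * √y))) / (√y) ^ 2) y := by
      have := (hasDerivAt_const y a).fun_div hd hs.ne'
      simpa using this
    have d2 : HasDerivAt (fun y : ℝ => b * √y) (b * (1 / (2 * √y))) y := hd.const_mul b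
    have e1 := (hGd (a / √y - b * √y)).comp y (d1.fun_sub d2)
    have e2 := (hGd (a / √y + b * √y)).comp y (d1.fun_add d2)
    have e := ((e1.const_mul (Real.exp (-(2 * a * b)))).add
      (e2.const_mul (Real.exp (2 * a * b)))).const_mul (-(1 / a))
    have hP' : P =ᶠ[𝓝 y] P0 := by
      filter_upwards [lt_mem_nhds hy] with z hz
      simp [hP, hz.ne']
    refine HasDerivAt.congr_of_eventuallyEq ?_ hP'
    refine HasDerivAt.congr_deriv e ?_
    have x1 : Real.exp (-(2 * a * b)) * Real.exp (-1 * (a / √y - b * √y) ^ 2) =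
        Real.exp (-(a ^ 2) / y - b ^ 2 * y) := by
      rw [← Real.exp_add]; congr 1
      have e0 : (a / √y - b * √y) ^ 2 = a ^ 2 / √y ^ 2 - 2 * a * b + b ^ 2 * √y ^ 2 := by
        field_simp; ring
      rw [e0, hs2]; ring
    have x2 : Real.exp (2 * a * b) * Real.exp (-1 * (a / √y + b * √y) ^ 2) =
        Real.exp (-(a ^ 2) / y - b ^ 2 * y) := by
      rw [← Real.exp_add]; congr 1
      have e0 : (a / √y + b * √y) ^ 2 = a ^ 2 / √y ^ 2 + 2 * a * b + b ^ 2 * √y ^ 2 := by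
        field_simp; ring
      rw [e0, hs2]; ring
    rw [← mul_assoc, ← mul_assoc, x1, x2, hs2]
    field_simp
    ring
  have hnn : ∀ y ∈ Ioi (0:ℝ), 0 ≤ Real.exp (-(a ^ 2) / y - b ^ 2 * y) / (y * √y) := by
    intro y hy
    have hy : 0 < y := hy
    positivity
  refine ⟨integrableOn_Ioi_deriv_of_nonneg hcont hderiv hnn hlim, ?_⟩
  rw [integral_Ioi_of_hasDerivAt_of_nonneg hcont hderiv hnn hlim]
  have e1 : √(π / a ^ 2) = √π / a := by
    rw [Real.sqrt_div Real.pi_pos.le, Real.sqrt_sq ha.le]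
  have e2 : √(a ^ 2 * b ^ 2) = a * b := by
    rw [← mul_pow, Real.sqrt_sq (by positivity)]
  rw [e1, e2]
  simp [hP, hL1, mul_assoc]

/-- The kernel `y ↦ y^{-3/2} e^{-A/y}` (zero for `y ≤ 0`). -/
noncomputable def hker (A y : ℝ) : ℝ := Real.exp (-A / y) / (y * √y)

lemma hker_nonneg (A y : ℝ) : 0 ≤ hker A y := by
  unfold hker
  rcases le_or_gt y 0 with h | h
  · simp [Real.sqrt_eq_zero_of_nonpos h]
  · positivity

lemma hker_of_nonpos (A : ℝ) {y : ℝ} (h : y ≤ 0) : hker A y = 0 := by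
  simp [hker, Real.sqrt_eq_zero_of_nonpos h]

lemma hker_measurable (A : ℝ) : Measurable (hker A) := by
  unfold hker; fun_prop

open MeasureTheory in
lemma hker_integrableOn (A : ℝ) (hA : 0 < A) : IntegrableOn (hker A) (Set.Ioi 0) := by
  have := (aux_integral A 0 hA le_rfl).1
  simpa [hker] using! this

open MeasureTheory in
lemma hker_integral (A : ℝ) (hA : 0 < A) : ∫ y in Set.Ioi (0:ℝ), hker A y = √(π / A) := by
  have := (aux_integral A 0 hA le_rfl).2
  simpa [hker] using! this

open MeasureTheory Filter Topology in
lemma aux_complex (A : ℝ) (hA : 0 < A) (z : ℂ) (hz : 0 < z.re) :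
    ∫ y in Set.Ioi (0:ℝ), (hker A y : ℂ) * cexp (-z * y) =
      (√(π / A) : ℂ) * cexp (-(2 * √A * z ^ (1 / 2 : ℂ))) := by
  set U : Set ℂ := {w | 0 < w.re} with hU
  have hUo : IsOpen U := isOpen_lt continuous_const Complex.continuous_re
  set J : ℂ → ℂ := fun z => ∫ y in Set.Ioi (0:ℝ), (hker A y : ℂ) * cexp (-z * y) with hJ
  set R : ℂ → ℂ := fun z => (√(π / A) : ℂ) * cexp (-(2 * √A * z ^ (1 / 2 : ℂ))) with hR
  have hmeas : ∀ w : ℂ, Measurable fun y : ℝ => (hker A y : ℂ) * cexp (-w * y) := by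
    intro w
    have := hker_measurable A
    fun_prop
  have hJd : DifferentiableOn ℂ J U := by
    intro w hw
    have hw : 0 < w.re := hw
    set δ := w.re / 2 with hδ
    have hδ0 : 0 < δ := by positivity
    have key := hasDerivAt_integral_of_dominated_loc_of_deriv_le
      (μ := volume.restrict (Set.Ioi (0:ℝ))) (x₀ := w) (s := {v : ℂ | δ < v.re})
      (F := fun v y => (hker A y : ℂ) * cexp (-v * y))
      (F' := fun v y => (hker A y : ℂ) * (cexp (-v * y) * (-(y : ℂ))))
      (bound := fun y => hker A y * (1 / δ))
      ((isOpen_lt continuous_const Complex.continuous_re).mem_nhds (by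
        simp only [Set.mem_ofPred_eq]; linarith))
      (Eventually.of_forall fun v => (hmeas v).aestronglyMeasurable) ?_ ?_ ?_ ?_ ?_
    · exact key.2.differentiableAt.differentiableWithinAt
    · refine Integrable.mono' (hker_integrableOn A hA) (hmeas w).aestronglyMeasurable ?_
      refine (ae_restrict_iff' measurableSet_Ioi).2 (Eventually.of_forall fun y hy => ?_)
      have hy : 0 < y := hy
      rw [norm_mul, Complex.norm_real, Real.norm_of_nonneg (hker_nonneg A y), Complex.norm_exp]
      refine mul_le_of_le_one_right (hker_nonneg A y) (Real.exp_le_one_iff.2 ?_)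
      simp; positivity
    · have := hmeas w
      have h2 : Measurable fun y : ℝ => (hker A y : ℂ) * (cexp (-w * y) * (-(y : ℂ))) := by
        have := hker_measurable A
        fun_prop
      exact h2.aestronglyMeasurable
    · refine (ae_restrict_iff' measurableSet_Ioi).2 (Eventually.of_forall fun y hy v hv => ?_)
      have hy : 0 < y := hy
      have hv : δ < v.re := hv
      rw [norm_mul, Complex.norm_real, Real.norm_of_nonneg (hker_nonneg A y), norm_mul,
        Complex.norm_exp, norm_neg, Complex.norm_real, Real.norm_of_nonneg hy.le]
      refine mul_le_mul_of_nonneg_left ?_ (hker_nonneg A y)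
      have h1 : (-v * (y:ℂ)).re = -(v.re * y) := by simp
      rw [h1, Real.exp_neg, le_div_iff₀ hδ0]
      have h3 : δ * y ≤ Real.exp (v.re * y) := by
        have := Real.add_one_le_exp (v.re * y)
        nlinarith
      have h4 := Real.exp_pos (v.re * y)
      rw [mul_assoc, inv_mul_le_iff₀ h4]
      linarith
    · exact (hker_integrableOn A hA).mul_const _
    · refine Eventually.of_forall fun y v hv => ?_
      have h1 : HasDerivAt (fun v : ℂ => -v * (y:ℂ)) (-(y:ℂ)) v := by
        simpa using ((hasDerivAt_id v).neg).mul_const (y:ℂ)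
      exact (h1.cexp).const_mul _
  have hRd : DifferentiableOn ℂ R U := by
    intro w hw
    have hw : 0 < w.re := hw
    have h1 : DifferentiableAt ℂ (fun z : ℂ => z ^ (1 / 2 : ℂ)) w :=
      differentiableAt_id.cpow_const (Or.inl hw)
    exact ((h1.const_mul _).neg.cexp.const_mul _).differentiableWithinAt
  have hreal : ∀ t : ℝ, 0 < t → J t = R t := by
    intro t ht
    have h := (aux_integral A t hA ht.le).2
    have e1 : J t = ((∫ y in Set.Ioi (0:ℝ), Real.exp (-A / y - t * y) / (y * √y) : ℝ) : ℂ) := by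
      rw [← integral_complex_ofReal]
      refine integral_congr_ae (Eventually.of_forall fun y => ?_)
      simp only [hker]
      push_cast
      rw [sub_eq_add_neg, Complex.exp_add, neg_mul]
      ring
    rw [e1, h]
    simp only [hR]
    have : (t : ℂ) ^ (1 / 2 : ℂ) = (√t : ℂ) := by
      rw [Real.sqrt_eq_rpow, Complex.ofReal_cpow ht.le]; push_cast; rfl
    rw [this, Real.sqrt_mul hA.le]
    push_cast
    ring_nf
  have hpre : IsPreconnected U := (convex_halfSpace_re_gt 0).isPreconnected
  have := (hJd.analyticOnNhd hUo).eqOn_of_preconnected_of_frequently_eq (hRd.analyticOnNhd hUo)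
    hpre (z₀ := 1) (by simp [hU]) ?_
  · exact this hz
  · have ht : Tendsto (fun n : ℕ => (((1 : ℝ) + 1 / ((n : ℝ) + 1) : ℝ) : ℂ)) atTop (𝓝[≠] 1) := by
      refine tendsto_nhdsWithin_iff.2 ⟨?_, Eventually.of_forall fun n => ?_⟩
      · have h := (tendsto_one_div_add_atTop_nhds_zero_nat (𝕜 := ℝ)).const_add 1
        have h2 := (Complex.continuous_ofReal.tendsto _).comp h
        simpa [Function.comp_def] using h2
      · simp only [Set.mem_compl_iff, Set.mem_singleton_iff]
        intro h
        have h' : (1 : ℝ) + 1 / ((n : ℝ) + 1) = 1 := by exact_mod_cast h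
        have : (0:ℝ) < 1 / ((n : ℝ) + 1) := by positivity
        linarith
    refine ht.frequently (Frequently.of_forall fun n => hreal _ (by positivity))

open MeasureTheory Filter Topology in
lemma aux_imag (A : ℝ) (hA : 0 < A) (η : ℝ) (hη : 0 < η) :
    ∫ y in Set.Ioi (0:ℝ), (hker A y : ℂ) * cexp (-(η * I) * y) =
      (√(π / A) : ℂ) * cexp (-(2 * √(A * η / 2) * (1 + I))) := by
  have hL : Tendsto (fun ε : ℝ => ∫ y in Set.Ioi (0:ℝ), (hker A y : ℂ) * cexp (-(ε + η * I) * y))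
      (𝓝[>] 0) (𝓝 (∫ y in Set.Ioi (0:ℝ), (hker A y : ℂ) * cexp (-(η * I) * y))) := by
    refine tendsto_integral_filter_of_dominated_convergence (hker A) ?_ ?_
      (hker_integrableOn A hA) ?_
    · refine Eventually.of_forall fun ε => Measurable.aestronglyMeasurable ?_
      have := hker_measurable A
      fun_prop
    · filter_upwards [self_mem_nhdsWithin] with ε hε
      have hε : 0 < ε := hε
      refine (ae_restrict_iff' measurableSet_Ioi).2 (Eventually.of_forall fun y hy => ?_)
      have hy : 0 < y := hy
      rw [norm_mul, Complex.norm_real, Real.norm_of_nonneg (hker_nonneg A y), Complex.norm_exp]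
      refine mul_le_of_le_one_right (hker_nonneg A y) (Real.exp_le_one_iff.2 ?_)
      simp; positivity
    · refine Eventually.of_forall fun y => ?_
      have h : Continuous fun ε : ℝ => (hker A y : ℂ) * cexp (-(ε + η * I) * y) := by fun_prop
      have := (h.tendsto 0).mono_left (nhdsWithin_le_nhds (s := Set.Ioi 0))
      simpa using this
  have hRlim : Tendsto (fun ε : ℝ => (√(π / A) : ℂ) * cexp (-(2 * √A * (ε + η * I) ^ (1 / 2 : ℂ))))
      (𝓝[>] 0) (𝓝 ((√(π / A) : ℂ) * cexp (-(2 * √A * (η * I) ^ (1 / 2 : ℂ))))) := by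
    have hc : ContinuousAt (fun z : ℂ => (√(π / A) : ℂ) * cexp (-(2 * √A * z ^ (1 / 2 : ℂ))))
        (η * I) := by
      have h1 : DifferentiableAt ℂ (fun z : ℂ => z ^ (1 / 2 : ℂ)) (η * I) :=
        differentiableAt_id.cpow_const (Or.inr (by simp [hη.ne']))
      exact ((h1.const_mul _).neg.cexp.const_mul _).continuousAt
    have h2 : Tendsto (fun ε : ℝ => (ε + η * I : ℂ)) (𝓝[>] 0) (𝓝 (η * I)) := by
      have h : Continuous fun ε : ℝ => (ε + η * I : ℂ) := by fun_prop
      have := (h.tendsto 0).mono_left (nhdsWithin_le_nhds (s := Set.Ioi 0))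
      simpa using this
    exact hc.tendsto.comp h2
  have hroot : ((η : ℂ) * I) ^ (1 / 2 : ℂ) = (√(η / 2) : ℂ) * (1 + I) := by
    have e : (η : ℂ) * I = ((√(η / 2) : ℂ) * (1 + I)) ^ 2 := by
      rw [mul_pow]
      have h1 : ((√(η / 2) : ℝ) : ℂ) ^ 2 = ((η / 2 : ℝ) : ℂ) := by
        rw [← Complex.ofReal_pow, Real.sq_sqrt (by positivity)]
      have h2 : (1 + I) ^ 2 = 2 * I := by
        ring_nf; rw [I_sq]; ring
      rw [h1, h2]; push_cast; ring
    rw [e]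
    have harg : ((√(η / 2) : ℂ) * (1 + I)).arg = π / 4 := by
      rw [Complex.arg_real_mul _ (Real.sqrt_pos.2 (by positivity))]
      rw [Complex.arg_of_re_nonneg (by simp)]
      have : ‖(1 + I : ℂ)‖ = √2 := by
        rw [Complex.norm_def]; simp [Complex.normSq_apply]; norm_num
      rw [this]
      simp only [add_im, one_im, I_im, zero_add]
      rw [← Real.arcsin_sin (x := π / 4) (by linarith [Real.pi_pos]) (by linarith [Real.pi_pos])]
      rw [Real.sin_pi_div_four]
      congr 1
      have : √(2:ℝ) ^ 2 = 2 := Real.sq_sqrt (by norm_num)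
      field_simp; linarith
    have h := Complex.pow_cpow_nat_inv (x := (√(η / 2) : ℂ) * (1 + I)) (n := 2) (by norm_num)
      (by rw [harg]; norm_num; linarith [Real.pi_pos]) (by rw [harg]; norm_num; linarith [Real.pi_pos])
    simpa using h
  have hEq : ∀ᶠ ε : ℝ in 𝓝[>] 0,
      ∫ y in Set.Ioi (0:ℝ), (hker A y : ℂ) * cexp (-(ε + η * I) * y) =
      (√(π / A) : ℂ) * cexp (-(2 * √A * (ε + η * I) ^ (1 / 2 : ℂ))) := by
    filter_upwards [self_mem_nhdsWithin] with ε hε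
    have hε : 0 < ε := hε
    exact aux_complex A hA _ (by simpa using hε)
  have := tendsto_nhds_unique (hL.congr' hEq) hRlim
  rw [this, hroot]
  rw [mul_div_assoc, Real.sqrt_mul hA.le]
  push_cast
  ring_nf

lemma hker_le (A : ℝ) (hA : 0 < A) (y : ℝ) : hker A y ≤ 2 / A ^ 2 * √y := by
  rcases le_or_gt y 0 with h | h
  · rw [hker_of_nonpos A h]; positivity
  · have hs : 0 < √y := Real.sqrt_pos.2 h
    have hs2 : √y ^ 2 = y := Real.sq_sqrt h.le
    have h1 := Real.pow_div_factorial_le_exp (x := A / y) (by positivity) 2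
    have h2 : Real.exp (-A / y) ≤ 2 * y ^ 2 / A ^ 2 := by
      rw [neg_div, Real.exp_neg]
      rw [inv_le_comm₀ (Real.exp_pos _) (by positivity)]
      refine le_trans (le_of_eq ?_) h1
      simp [Nat.factorial]
      field_simp
    unfold hker
    rw [div_le_iff₀ (by positivity)]
    refine h2.trans (le_of_eq ?_)
    calc 2 * y ^ 2 / A ^ 2 = 2 / A ^ 2 * (y * y) := by ring
      _ = 2 / A ^ 2 * (√y ^ 2 * y) := by rw [hs2]
      _ = _ := by ring

lemma hker_le_rpow (A : ℝ) (hA : 0 < A) {y : ℝ} (h : 0 < y) : hker A y ≤ y ^ (-(3 / 2) : ℝ) := by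
  have e : y ^ (-(3 / 2) : ℝ) = 1 / (y * √y) := by
    rw [Real.rpow_neg h.le, one_div, Real.sqrt_eq_rpow]
    congr 1
    rw [show (3 / 2 : ℝ) = 1 + 1 / 2 by norm_num, Real.rpow_add h, Real.rpow_one]
  rw [e]
  unfold hker
  gcongr
  rw [Real.exp_le_one_iff, neg_div]
  have : 0 < A / y := by positivity
  linarith

open Filter Topology in
lemma hker_continuous (A : ℝ) (hA : 0 < A) : Continuous (hker A) := by
  rw [continuous_iff_continuousAt]
  intro y
  rcases lt_trichotomy y 0 with h | h | h
  · have : hker A =ᶠ[𝓝 y] fun _ => 0 := by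
      filter_upwards [gt_mem_nhds h] with z hz
      exact hker_of_nonpos A hz.le
    exact continuousAt_const.congr this.symm
  · subst h
    have h0 : hker A 0 = 0 := hker_of_nonpos A le_rfl
    rw [ContinuousAt, h0]
    refine squeeze_zero (fun z => hker_nonneg A z) (fun z => hker_le A hA z) ?_
    have : Continuous fun z : ℝ => 2 / A ^ 2 * √z := by fun_prop
    simpa using this.tendsto 0
  · unfold hker
    have hs : 0 < √y := Real.sqrt_pos.2 h
    have hne : y * √y ≠ 0 := by positivity
    have hne' : y ≠ 0 := h.ne'
    exact ContinuousAt.div (by fun_prop (disch := assumption)) (by fun_prop) hne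

lemma exp_sqrt_bound (c t : ℝ) (hc : 0 < c) (ht : 0 < t) :
    Real.exp (-(c * √t)) ≤ 24 / c ^ 4 * (1 / t ^ 2) := by
  have h1 := Real.pow_div_factorial_le_exp (x := c * √t) (by positivity) 4
  have hs2 : √t ^ 2 = t := Real.sq_sqrt ht.le
  have h4 : (c * √t) ^ 4 = c ^ 4 * t ^ 2 := by
    rw [mul_pow, show √t ^ 4 = (√t ^ 2) ^ 2 by ring, hs2]
  rw [h4] at h1
  rw [Real.exp_neg, inv_le_comm₀ (Real.exp_pos _) (by positivity)]
  refine le_trans (le_of_eq ?_) h1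
  simp [Nat.factorial]
  field_simp

lemma summable_one_div_succ_sq : Summable fun n : ℕ => 1 / ((n : ℝ) + 1) ^ 2 := by
  have := (summable_nat_add_iff 1).2 (Real.summable_one_div_nat_pow.2 (by norm_num : 1 < 2))
  simpa using this

lemma summable_succ_rpow {s : ℝ} (hs : 1 < s) : Summable fun n : ℕ => ((n : ℝ) + 1) ^ (-s) := by
  have := (summable_nat_add_iff 1).2 (Real.summable_nat_rpow.2 (by linarith : -s < -1))
  simpa using this

lemma hker_summable (A : ℝ) (hA : 0 < A) : Summable fun m : ℕ => hker A ((m : ℝ) + 1) :=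
  Summable.of_nonneg_of_le (fun _ => hker_nonneg _ _)
    (fun m => hker_le_rpow A hA (by positivity)) (summable_succ_rpow (by norm_num))

open MeasureTheory Filter Topology FourierTransform in
lemma poisson_h (A : ℝ) (hA : 0 < A) :
    ∑' m : ℕ, hker A ((m : ℝ) + 1) = √(π / A) * (1 + 2 * ∑' n : ℕ,
      Real.exp (-(2 * √(π * A * ((n : ℝ) + 1)))) * Real.cos (2 * √(π * A * ((n : ℝ) + 1)))) := by
  set f : ℝ → ℂ := fun y => (hker A y : ℂ) with hf
  have hFf : ∀ w : ℝ, 𝓕 f w = ∫ y in Set.Ioi (0:ℝ), (hker A y : ℂ) * cexp (-((2 * π * w : ℝ) * I) * y) := by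
    intro w
    rw [Real.fourier_real_eq_integral_exp_smul]
    rw [← integral_indicator measurableSet_Ioi]
    refine integral_congr_ae (Eventually.of_forall fun y => ?_)
    simp only [hf, Set.indicator]
    split_ifs with h
    · rw [smul_eq_mul, mul_comm]; congr 2; push_cast; ring
    · rw [hker_of_nonpos A (not_lt.1 h)]; simp
  have hpos : ∀ n : ℕ, 𝓕 f ((n : ℝ) + 1) = (√(π / A) : ℂ) *
      cexp (-(2 * √(π * A * ((n : ℝ) + 1)) * (1 + I))) := by
    intro n
    rw [hFf, aux_imag A hA _ (by positivity)]
    congr 5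
    push_cast
    ring_nf
  have hneg : ∀ n : ℕ, 𝓕 f (-((n : ℝ) + 1)) = (starRingEnd ℂ) (𝓕 f ((n : ℝ) + 1)) := by
    intro n
    rw [hFf, hFf, ← integral_conj]
    refine integral_congr_ae (Eventually.of_forall fun y => ?_)
    simp only [map_mul, Complex.conj_ofReal, ← Complex.exp_conj]
    congr 2
    simp only [map_neg, map_mul, Complex.conj_ofReal, Complex.conj_I]
    push_cast
    ring
  have hzero : 𝓕 f 0 = (√(π / A) : ℂ) := by
    rw [hFf]
    rw [← hker_integral A hA, ← integral_complex_ofReal]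
    simp
  set c : ℝ := 2 * √(π * A) with hc
  have hc0 : 0 < c := by positivity
  have hce : ∀ n : ℕ, 2 * √(π * A * ((n : ℝ) + 1)) = c * √((n:ℝ) + 1) := by
    intro n
    rw [Real.sqrt_mul (by positivity)]; ring
  have hnorm : ∀ n : ℕ, ‖𝓕 f ((n : ℝ) + 1)‖ ≤
      √(π / A) * (24 / c ^ 4 * (1 / ((n : ℝ) + 1) ^ 2)) := by
    intro n
    rw [hpos, norm_mul, Complex.norm_real, Real.norm_of_nonneg (Real.sqrt_nonneg _),
      Complex.norm_exp]
    refine mul_le_mul_of_nonneg_left ?_ (Real.sqrt_nonneg _)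
    refine le_trans (le_of_eq ?_) (exp_sqrt_bound c _ hc0 (by positivity))
    rw [← hce]
    congr 1
    simp
  have hsb : Summable fun n : ℕ => √(π / A) * (24 / c ^ 4 * (1 / ((n : ℝ) + 1) ^ 2)) :=
    (summable_one_div_succ_sq.mul_left _).mul_left _
  have hs1 : Summable fun n : ℕ => 𝓕 f ((n : ℝ) + 1) := Summable.of_norm_bounded hsb hnorm
  have hs2 : Summable fun n : ℕ => 𝓕 f (-((n : ℝ) + 1)) :=
    Summable.of_norm_bounded hsb fun n => by rw [hneg, RCLike.norm_conj]; exact hnorm n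
  have H1 : HasSum (fun n : ℤ => 𝓕 f (n : ℝ)) ((∑' n : ℕ, 𝓕 f ((n : ℝ) + 1)) + 𝓕 f 0 +
      ∑' n : ℕ, 𝓕 f (-((n : ℝ) + 1))) := by
    have := HasSum.of_add_one_of_neg_add_one (f := fun n : ℤ => 𝓕 f (n : ℝ))
      (m := ∑' n : ℕ, 𝓕 f ((n : ℝ) + 1)) (m' := ∑' n : ℕ, 𝓕 f (-((n : ℝ) + 1)))
      (by simpa using hs1.hasSum) (by push_cast; exact hs2.hasSum)
    simpa using this
  have hP := Real.tsum_eq_tsum_fourier_of_rpow_decay_of_summable (f := f)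
    (Complex.continuous_ofReal.comp (hker_continuous A hA)) (b := 3 / 2) (by norm_num)
    (Asymptotics.IsBigO.of_bound 1 (Eventually.of_forall fun y => by
      rw [hf, Complex.norm_real, Real.norm_of_nonneg (hker_nonneg A y), one_mul,
        Real.norm_of_nonneg (by positivity)]
      rcases le_or_gt y 0 with h | h
      · rw [hker_of_nonpos A h]; positivity
      · rw [abs_of_pos h]; exact hker_le_rpow A hA h)) H1.summable 0
  simp only [zero_add, QuotientAddGroup.mk_zero, fourier_eval_zero, mul_one] at hP
  have H2 : HasSum (fun n : ℤ => f (n : ℝ)) ((∑' n : ℕ, f ((n : ℝ) + 1)) + f 0 + 0) := by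
    have hsum : Summable fun n : ℕ => f ((n : ℝ) + 1) :=
      (Complex.hasSum_ofReal.2 (hker_summable A hA).hasSum).summable
    have := HasSum.of_add_one_of_neg_add_one (f := fun n : ℤ => f (n : ℝ))
      (m := ∑' n : ℕ, f ((n : ℝ) + 1)) (m' := 0)
      (by simpa using hsum.hasSum) (by
        have : ∀ n : ℕ, f (((-((n : ℤ) + 1) : ℤ)) : ℝ) = 0 := by
          intro n
          simp only [hf]
          rw [hker_of_nonpos]; · simp
          push_cast
          have : (0:ℝ) ≤ n := Nat.cast_nonneg n
          linarith
        simp only [this]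
        exact hasSum_zero)
    simpa using this
  rw [H2.tsum_eq, H1.tsum_eq] at hP
  have hf0 : f 0 = 0 := by simp [hf, hker_of_nonpos]
  rw [hf0, hzero] at hP
  have hcos : ∀ n : ℕ, 𝓕 f ((n : ℝ) + 1) + 𝓕 f (-((n : ℝ) + 1)) =
      ((√(π / A) * (2 * (Real.exp (-(2 * √(π * A * ((n : ℝ) + 1)))) *
        Real.cos (2 * √(π * A * ((n : ℝ) + 1))))) : ℝ) : ℂ) := by
    intro n
    rw [hneg, Complex.add_conj, hpos]
    rw [← Complex.ofReal_ofNat, ← Complex.ofReal_mul]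
    congr 1
    rw [Complex.re_ofReal_mul, Complex.exp_re]
    simp
    ring
  have hP' : (∑' n : ℕ, f ((n : ℝ) + 1)) = ∑' n : ℕ, (𝓕 f ((n : ℝ) + 1) + 𝓕 f (-((n : ℝ) + 1)))
      + (√(π / A) : ℂ) := by
    rw [hs1.tsum_add hs2]
    simp only [add_zero] at hP
    rw [hP]; ring
  simp only [hcos] at hP'
  rw [← Complex.ofReal_tsum, ← Complex.ofReal_tsum, ← Complex.ofReal_add] at hP'
  have := Complex.ofReal_injective hP'
  rw [this, tsum_mul_left, tsum_mul_left]
  ring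

/-- Euler-Maclaurin type term for `(s-1) ζ(s)`. -/
noncomputable def zT (n : ℕ) (s : ℂ) : ℂ :=
  (s - 1) * (((n : ℝ) + 1 : ℝ) : ℂ) ^ (-s) +
    ((((n : ℝ) + 2 : ℝ) : ℂ) ^ (1 - s) - (((n : ℝ) + 1 : ℝ) : ℂ) ^ (1 - s))

lemma hasDerivAt_real_cpow (c : ℂ) {y : ℝ} (hy : 0 < y) :
    HasDerivAt (fun y : ℝ => (y : ℂ) ^ c) (c * (y : ℂ) ^ (c - 1)) y := by
  have h : HasDerivAt (fun z : ℂ => z ^ c) (c * (y : ℂ) ^ (c - 1) * 1) (y : ℂ) :=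
    (hasDerivAt_id (y : ℂ)).cpow_const (Or.inl (by simpa using hy))
  simpa using h.comp_ofReal

lemma zT_bound (n : ℕ) (s : ℂ) (hs : 1 / 4 < s.re) (hs4 : ‖s‖ < 4) :
    ‖zT n s‖ ≤ 20 * ((n : ℝ) + 1) ^ (-(5 / 4) : ℝ) := by
  set a : ℝ := (n : ℝ) + 1 with ha
  have ha1 : 1 ≤ a := by simp [ha]
  have ha0 : 0 < a := by linarith
  have hb : (n : ℝ) + 2 = a + 1 := by rw [ha]; ring
  have h1 : ∀ y ∈ Set.Icc a (a + 1),
      ‖(y : ℂ) ^ (-s) - (a : ℂ) ^ (-s)‖ ≤ ‖s‖ * a ^ (-(5 / 4) : ℝ) := by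
    intro y hy
    have := (convex_Icc a (a + 1)).norm_image_sub_le_of_norm_hasDerivWithin_le
      (f := fun y : ℝ => (y : ℂ) ^ (-s)) (f' := fun y : ℝ => (-s) * (y : ℂ) ^ (-s - 1))
      (C := ‖s‖ * a ^ (-(5 / 4) : ℝ)) (x := a) (y := y)
      (fun t ht => (hasDerivAt_real_cpow (-s) (by linarith [ht.1])).hasDerivWithinAt)
      (fun t ht => by
        have ht0 : 0 < t := by linarith [ht.1]
        rw [norm_mul, norm_neg, Complex.norm_cpow_eq_rpow_re_of_pos ht0]
        refine mul_le_mul_of_nonneg_left ?_ (norm_nonneg _)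
        have e : (-s - 1).re = -(s.re + 1) := by simp; ring
        rw [e]
        calc t ^ (-(s.re + 1)) ≤ a ^ (-(s.re + 1)) :=
              Real.rpow_le_rpow_of_nonpos ha0 ht.1 (by linarith)
          _ ≤ a ^ (-(5 / 4) : ℝ) := Real.rpow_le_rpow_of_exponent_le ha1 (by linarith))
      ⟨le_rfl, by linarith⟩ hy
    refine this.trans ?_
    have h0 : 0 ≤ ‖s‖ * a ^ (-(5 / 4) : ℝ) := by positivity
    refine mul_le_of_le_one_right h0 ?_
    rw [Real.norm_of_nonneg (by linarith [hy.1])]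
    linarith [hy.2]
  have h2 := (convex_Icc a (a + 1)).norm_image_sub_le_of_norm_hasDerivWithin_le
      (f := fun y : ℝ => (y : ℂ) ^ (1 - s) + ((s - 1) * (a : ℂ) ^ (-s)) * (y : ℂ))
      (f' := fun y : ℝ => (1 - s) * (y : ℂ) ^ (1 - s - 1) + ((s - 1) * (a : ℂ) ^ (-s)) * 1)
      (C := ‖s - 1‖ * (‖s‖ * a ^ (-(5 / 4) : ℝ))) (x := a) (y := a + 1)
      (fun t ht => by
        have d1 := hasDerivAt_real_cpow (1 - s) (y := t) (by linarith [ht.1])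
        have d2 : HasDerivAt (fun y : ℝ => (y : ℂ)) 1 t := Complex.ofRealCLM.hasDerivAt
        exact (d1.fun_add (d2.const_mul _)).hasDerivWithinAt)
      (fun t ht => by
        have e : (1 - s) * (t : ℂ) ^ (1 - s - 1) + ((s - 1) * (a : ℂ) ^ (-s)) * 1 =
            -((s - 1) * ((t : ℂ) ^ (-s) - (a : ℂ) ^ (-s))) := by
          rw [show 1 - s - 1 = -s by ring]; ring
        rw [e, norm_neg, norm_mul]
        exact mul_le_mul_of_nonneg_left (h1 t ht) (norm_nonneg _))
      ⟨le_rfl, by linarith⟩ ⟨by linarith, le_rfl⟩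
  have e : zT n s = ((a + 1 : ℝ) : ℂ) ^ (1 - s) + ((s - 1) * (a : ℂ) ^ (-s)) * ((a + 1 : ℝ) : ℂ) -
      ((a : ℂ) ^ (1 - s) + ((s - 1) * (a : ℂ) ^ (-s)) * (a : ℂ)) := by
    unfold zT
    rw [hb, ← ha]
    push_cast
    ring
  rw [e]
  refine h2.trans ?_
  have h3 : ‖s - 1‖ ≤ 5 := by
    have := norm_sub_le s 1
    simp at this
    linarith
  have h4 : 0 ≤ a ^ (-(5 / 4) : ℝ) := by positivity
  have h5 : ‖a + 1 - a‖ = 1 := by simp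
  rw [h5, mul_one]
  calc ‖s - 1‖ * (‖s‖ * a ^ (-(5 / 4) : ℝ)) ≤ 5 * (4 * a ^ (-(5 / 4) : ℝ)) := by gcongr
    _ = _ := by ring

open Filter Topology in
lemma zeta1_eq_of_one_lt (s : ℂ) (hs : 1 < s.re) (hs4 : ‖s‖ < 4) :
    riemannZeta₁ s = 1 + ∑' n : ℕ, zT n s := by
  have hs1 : s ≠ 1 := by rintro rfl; simp at hs
  have hT : Summable fun n : ℕ => zT n s :=
    Summable.of_norm_bounded ((summable_succ_rpow (by norm_num : (1:ℝ) < 5 / 4)).mul_left 20)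
      fun n => zT_bound n s (by linarith) hs4
  have hZ : HasSum (fun n : ℕ => (s - 1) * (((n : ℝ) + 1 : ℝ) : ℂ) ^ (-s))
      ((s - 1) * riemannZeta s) := by
    refine HasSum.mul_left _ ?_
    rw [zeta_eq_tsum_one_div_nat_add_one_cpow hs]
    have hsum : Summable fun n : ℕ => 1 / ((n : ℂ) + 1) ^ s := by
      have := (summable_nat_add_iff 1).2 (Complex.summable_one_div_nat_cpow.2 hs)
      simpa using this
    have e : (fun n : ℕ => (((n : ℝ) + 1 : ℝ) : ℂ) ^ (-s)) =
        fun n : ℕ => 1 / ((n : ℂ) + 1) ^ s := by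
      funext n; rw [Complex.cpow_neg, one_div]; push_cast; rfl
    rw [e]
    exact hsum.hasSum
  have hD : Summable fun n : ℕ =>
      ((((n : ℝ) + 2 : ℝ) : ℂ) ^ (1 - s) - (((n : ℝ) + 1 : ℝ) : ℂ) ^ (1 - s)) := by
    refine (hT.sub hZ.summable).congr fun n => ?_
    unfold zT; ring
  have hlim0 : Tendsto (fun N : ℕ => (((N : ℝ) + 1 : ℝ) : ℂ) ^ (1 - s)) atTop (𝓝 0) := by
    rw [tendsto_zero_iff_norm_tendsto_zero]
    have h1 : Tendsto (fun N : ℕ => (N : ℝ) + 1) atTop atTop :=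
      tendsto_atTop_add_const_right _ _ tendsto_natCast_atTop_atTop
    have h2 := (tendsto_rpow_neg_atTop (y := s.re - 1) (by linarith)).comp h1
    refine h2.congr fun N => ?_
    rw [Complex.norm_cpow_eq_rpow_re_of_pos (by positivity)]
    simp
  have hD' : HasSum (fun n : ℕ =>
      ((((n : ℝ) + 2 : ℝ) : ℂ) ^ (1 - s) - (((n : ℝ) + 1 : ℝ) : ℂ) ^ (1 - s))) (0 - 1) := by
    rw [hD.hasSum_iff_tendsto_nat]
    refine (hlim0.sub_const 1).congr fun N => ?_
    have := Finset.sum_range_sub (fun n : ℕ => (((n : ℝ) + 1 : ℝ) : ℂ) ^ (1 - s)) N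
    rw [show (((0 : ℕ) : ℝ) + 1 : ℝ) = 1 by simp, Complex.ofReal_one, Complex.one_cpow] at this
    rw [← this]
    refine Finset.sum_congr rfl fun n _ => ?_
    congr 3
    push_cast; ring
  have := (hZ.add hD').tsum_eq
  have e2 : (∑' n : ℕ, zT n s) = (s - 1) * riemannZeta s + (0 - 1) := this
  rw [e2, riemannZeta_eq_inv_sub_mul hs1]
  have : s - 1 ≠ 0 := sub_ne_zero.2 hs1
  field_simp
  ring

open Filter Topology in
lemma zeta1_eq (s : ℂ) (hs : 1 / 4 < s.re) (hs4 : ‖s‖ < 4) :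
    riemannZeta₁ s = 1 + ∑' n : ℕ, zT n s := by
  set U : Set ℂ := {w | 1 / 4 < w.re} ∩ Metric.ball 0 4 with hU
  have hUo : IsOpen U :=
    (isOpen_lt continuous_const Complex.continuous_re).inter Metric.isOpen_ball
  have hconv : Convex ℝ U := (convex_halfSpace_re_gt _).inter (convex_ball _ _)
  have hd : DifferentiableOn ℂ (fun s => 1 + ∑' n : ℕ, zT n s) U := by
    refine DifferentiableOn.const_add _ ?_
    refine differentiableOn_tsum_of_summable_norm
      ((summable_succ_rpow (by norm_num : (1:ℝ) < 5 / 4)).mul_left 20) (fun n => ?_) hUo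
      (fun n w hw => zT_bound n w hw.1 (by simpa using hw.2))
    unfold zT
    have h1 : (((n : ℝ) + 1 : ℝ) : ℂ) ≠ 0 := by
      exact_mod_cast (by positivity : ((n : ℝ) + 1) ≠ 0)
    have h2 : (((n : ℝ) + 2 : ℝ) : ℂ) ≠ 0 := by
      exact_mod_cast (by positivity : ((n : ℝ) + 2) ≠ 0)
    have a1 : Differentiable ℂ fun s : ℂ => (((n : ℝ) + 1 : ℝ) : ℂ) ^ (-s) :=
      differentiable_id.neg.const_cpow (Or.inl h1)
    have a2 : Differentiable ℂ fun s : ℂ => (((n : ℝ) + 1 : ℝ) : ℂ) ^ (1 - s) :=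
      (differentiable_id.const_sub 1).const_cpow (Or.inl h1)
    have a3 : Differentiable ℂ fun s : ℂ => (((n : ℝ) + 2 : ℝ) : ℂ) ^ (1 - s) :=
      (differentiable_id.const_sub 1).const_cpow (Or.inl h2)
    exact (((differentiable_id.sub_const 1).mul a1).add (a3.sub a2)).differentiableOn
  have := (differentiable_riemannZeta₁.differentiableOn.analyticOnNhd hUo).eqOn_of_preconnected_of_eventuallyEq
    (hd.analyticOnNhd hUo) hconv.isPreconnected (z₀ := 2) (by constructor <;> simp <;> norm_num) ?_
  · exact this ⟨hs, by simpa using hs4⟩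
  · have h1 : {w : ℂ | 1 < w.re} ∩ Metric.ball 0 4 ∈ 𝓝 (2 : ℂ) :=
      ((isOpen_lt continuous_const Complex.continuous_re).inter Metric.isOpen_ball).mem_nhds
        (by constructor <;> simp <;> norm_num)
    filter_upwards [h1] with w hw
    exact zeta1_eq_of_one_lt w hw.1 (by simpa using hw.2)

open Filter Topology in
lemma zeta_half_limit : ∃ Z : ℝ, riemannZeta (1 / 2) = (Z : ℂ) ∧
    Tendsto (fun N : ℕ => (∑ m ∈ Finset.range N, 1 / √((m : ℝ) + 1)) - 2 * √(N : ℝ))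
      atTop (𝓝 Z) := by
  have hb : (1 / 4 : ℝ) < ((1 / 2 : ℂ)).re := by norm_num
  have hn : ‖(1 / 2 : ℂ)‖ < 4 := by norm_num
  have hz := zeta1_eq (1 / 2) hb hn
  have hT : Summable fun n : ℕ => zT n (1 / 2) :=
    Summable.of_norm_bounded ((summable_succ_rpow (by norm_num : (1:ℝ) < 5 / 4)).mul_left 20)
      fun n => zT_bound n _ hb hn
  have hpow : ∀ t : ℝ, 0 < t → (t : ℂ) ^ (1 / 2 : ℂ) = (√t : ℂ) := by
    intro t ht
    rw [Real.sqrt_eq_rpow, Complex.ofReal_cpow ht.le]; push_cast; rfl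
  have hterm : ∀ n : ℕ, zT n (1 / 2) =
      ((-(1 / 2) * (1 / √((n : ℝ) + 1)) + (√((n : ℝ) + 2) - √((n : ℝ) + 1)) : ℝ) : ℂ) := by
    intro n
    unfold zT
    rw [show (1 : ℂ) - 1 / 2 = 1 / 2 by norm_num, Complex.cpow_neg, hpow _ (by positivity),
      hpow _ (by positivity)]
    push_cast
    rw [one_div (↑√((n:ℝ) + 1) : ℂ)]
    ring
  set c : ℕ → ℝ := fun n => -(1 / 2) * (1 / √((n : ℝ) + 1)) + (√((n : ℝ) + 2) - √((n : ℝ) + 1))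
    with hc
  have hcs : Summable c := by
    have : Summable fun n : ℕ => ((c n : ℝ) : ℂ) := hT.congr fun n => hterm n
    exact Complex.summable_ofReal.1 this
  refine ⟨-2 * (1 + ∑' n, c n), ?_, ?_⟩
  · rw [riemannZeta_eq_inv_sub_mul (by norm_num), hz]
    have hterm' : ∀ n, zT n (1 / 2) = ((c n : ℝ) : ℂ) := hterm
    simp only [hterm']
    rw [← Complex.ofReal_tsum, Complex.ofReal_mul, Complex.ofReal_add]
    norm_num
  · have h1 := hcs.hasSum.tendsto_sum_nat
    have h2 : Tendsto (fun N : ℕ => √((N : ℝ) + 1) - √(N : ℝ)) atTop (𝓝 0) := by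
      have h3 : Tendsto (fun N : ℕ => 1 / √(N : ℝ)) atTop (𝓝 0) :=
        (Real.tendsto_sqrt_atTop.comp tendsto_natCast_atTop_atTop).const_div_atTop 1
      refine squeeze_zero' (Eventually.of_forall fun N => ?_) ?_ h3
      · have := Real.sqrt_le_sqrt (by linarith : (N : ℝ) ≤ N + 1)
        linarith
      · filter_upwards [eventually_gt_atTop 0] with N hN
        have hN' : (0 : ℝ) < N := by exact_mod_cast hN
        have hs := Real.sqrt_pos.2 hN'
        have e1 := Real.sq_sqrt hN'.le
        have e2 : √((N : ℝ) + 1) ≤ √(N : ℝ) + 1 / √(N : ℝ) := by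
          rw [Real.sqrt_le_left (by positivity)]
          have : (√(N : ℝ) + 1 / √(N : ℝ)) ^ 2 = √(N : ℝ) ^ 2 + 2 + (1 / √(N : ℝ)) ^ 2 := by
            field_simp; ring
          rw [this, e1]
          have := sq_nonneg (1 / √(N : ℝ))
          linarith
        linarith
    have h4 := (((h1.const_add 1).const_mul (-2))).add (h2.const_mul 2)
    rw [mul_zero, add_zero] at h4
    refine h4.congr fun N => ?_
    simp only [hc, Finset.sum_add_distrib, ← Finset.mul_sum]
    have := Finset.sum_range_sub (fun n : ℕ => √((n : ℝ) + 1)) N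
    have e : ∑ i ∈ Finset.range N, (√((i : ℝ) + 2) - √((i : ℝ) + 1)) = √((N : ℝ) + 1) - 1 := by
      rw [show (1 : ℝ) = √(((0 : ℕ) : ℝ) + 1) by simp]
      simp only [Nat.cast_zero, zero_add, Real.sqrt_one] at this ⊢
      rw [← this]
      refine Finset.sum_congr rfl fun n _ => ?_
      congr 2
      push_cast; ring
    rw [e]
    ring

/-- `v(y) = y^{-1/2} e^{-A/y}`. -/
noncomputable def vker (A y : ℝ) : ℝ := Real.exp (-A / y) / √y

/-- Antiderivative of `vker A`. -/
noncomputable def Vker (A y : ℝ) : ℝ :=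
  2 * √y * Real.exp (-A / y) - 2 * A * ∫ s in (0:ℝ)..y, hker A s

lemma hasDerivAt_exp_div (A : ℝ) {y : ℝ} (hy : 0 < y) :
    HasDerivAt (fun y : ℝ => Real.exp (-A / y)) (Real.exp (-A / y) * (A / y ^ 2)) y := by
  have h : HasDerivAt (fun y : ℝ => -A / y) (A / y ^ 2) y := by
    have := (hasDerivAt_const y (-A)).fun_div (hasDerivAt_id' y) hy.ne'
    simpa using this
  exact h.exp

lemma hasDerivAt_Vker (A : ℝ) (hA : 0 < A) {y : ℝ} (hy : 0 < y) :
    HasDerivAt (Vker A) (vker A y) y := by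
  have h1 := hasDerivAt_exp_div A hy
  have h2 : HasDerivAt (fun y : ℝ => √y) (1 / (2 * √y)) y := Real.hasDerivAt_sqrt hy.ne'
  have h3 : HasDerivAt (fun y : ℝ => ∫ s in (0:ℝ)..y, hker A s) (hker A y) y :=
    ((hker_continuous A hA).integral_hasStrictDerivAt 0 y).hasDerivAt
  have h := ((h2.const_mul 2).fun_mul h1).fun_sub (h3.const_mul (2 * A))
  refine HasDerivAt.congr_deriv h ?_
  have hs : 0 < √y := Real.sqrt_pos.2 hy
  have hs2 : √y ^ 2 = y := Real.sq_sqrt hy.le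
  unfold vker hker
  have e : y ^ 2 = y * √y ^ 2 := by rw [hs2]; ring
  rw [e]
  field_simp
  ring

lemma hasDerivAt_vker (A : ℝ) {y : ℝ} (hy : 0 < y) :
    HasDerivAt (vker A) ((A / y - 1 / 2) * Real.exp (-A / y) / (y * √y)) y := by
  have h1 := hasDerivAt_exp_div A hy
  have h2 : HasDerivAt (fun y : ℝ => √y) (1 / (2 * √y)) y := Real.hasDerivAt_sqrt hy.ne'
  have hs : 0 < √y := Real.sqrt_pos.2 hy
  have hs2 : √y ^ 2 = y := Real.sq_sqrt hy.le
  have h := h1.fun_div h2 hs.ne'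
  refine HasDerivAt.congr_deriv h ?_
  rw [hs2]
  have e : √y * √y = y := by rw [← sq, hs2]
  field_simp
  linear_combination (2 * A) * hs2

lemma vker_nonneg (A y : ℝ) : 0 ≤ vker A y := by unfold vker; positivity

lemma vker_le (A : ℝ) (hA : 0 < A) {y : ℝ} (hy : 0 < y) : vker A y ≤ 1 / √A := by
  have hs : 0 < √y := Real.sqrt_pos.2 hy
  have ha : 0 < √A := Real.sqrt_pos.2 hA
  have hs2 : √y ^ 2 = y := Real.sq_sqrt hy.le
  have ha2 : √A ^ 2 = A := Real.sq_sqrt hA.le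
  unfold vker
  rw [neg_div, Real.exp_neg, div_le_div_iff₀ hs ha, inv_mul_le_iff₀ (Real.exp_pos _), one_mul]
  have h1 := Real.add_one_le_exp (A / y)
  have h2 : √A ≤ (A / y + 1) * √y := by
    have e : (A / y + 1) * √y = (√A ^ 2 + √y ^ 2) / √y := by
      rw [ha2, hs2]
      rw [div_add_one hy.ne']
      rw [div_mul_eq_mul_div, div_eq_div_iff hy.ne' hs.ne']
      rw [mul_assoc, ← sq, hs2]
    rw [e, le_div_iff₀ hs]
    nlinarith [sq_nonneg (√A - √y)]
  exact h2.trans (mul_le_mul_of_nonneg_right h1 hs.le)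

lemma Vker_continuousOn (A : ℝ) (hA : 0 < A) : ContinuousOn (Vker A) (Set.Ici 0) := by
  intro y hy
  rcases (show (0:ℝ) ≤ y from hy).eq_or_lt with h | h
  · subst h
    have h3 : Continuous (fun y : ℝ => 2 * A * ∫ s in (0:ℝ)..y, hker A s) :=
      continuous_const.mul (continuous_iff_continuousAt.2 fun y =>
        ((hker_continuous A hA).integral_hasStrictDerivAt 0 y).hasDerivAt.continuousAt)
    have h4 : ContinuousWithinAt (fun y : ℝ => 2 * √y * Real.exp (-A / y)) (Set.Ici 0) 0 := by
      rw [ContinuousWithinAt]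
      simp only [Real.sqrt_zero, mul_zero, zero_mul]
      refine squeeze_zero' (g := fun y : ℝ => 2 * √y) ?_ ?_ ?_
      · exact Filter.Eventually.of_forall fun y => by positivity
      · filter_upwards [self_mem_nhdsWithin] with y hy
        have hy : 0 ≤ y := hy
        refine mul_le_of_le_one_right (by positivity) (Real.exp_le_one_iff.2 ?_)
        rw [neg_div]
        have : 0 ≤ A / y := by positivity
        linarith
      · have : Continuous fun y : ℝ => 2 * √y := by fun_prop
        have := (this.tendsto 0).mono_left (nhdsWithin_le_nhds (s := Set.Ici 0))
        simpa using this
    exact h4.sub h3.continuousWithinAt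
  · exact (hasDerivAt_Vker A hA h).continuousAt.continuousWithinAt

/-- The Euler-Maclaurin discrepancy. -/
noncomputable def dker (A : ℝ) (m : ℕ) : ℝ :=
  vker A ((m : ℝ) + 1) - (Vker A ((m : ℝ) + 1) - Vker A m)

lemma dker_eq (A : ℝ) (hA : 0 < A) (m : ℕ) : ∃ c ∈ Set.Ioo (m : ℝ) ((m : ℝ) + 1),
    dker A m = vker A ((m : ℝ) + 1) - vker A c := by
  have hm : (0:ℝ) ≤ m := Nat.cast_nonneg m
  obtain ⟨c, hc, h⟩ := exists_hasDerivAt_eq_slope (Vker A) (vker A)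
    (show (m : ℝ) < (m : ℝ) + 1 by linarith)
    ((Vker_continuousOn A hA).mono fun y hy => hm.trans hy.1)
    (fun y hy => hasDerivAt_Vker A hA (lt_of_le_of_lt hm hy.1))
  refine ⟨c, hc, ?_⟩
  rw [h]
  unfold dker
  simp

lemma dker_bound1 (A : ℝ) (hA : 0 < A) (m : ℕ) : |dker A m| ≤ 1 / √A := by
  obtain ⟨c, hc, h⟩ := dker_eq A hA m
  have hm : (0:ℝ) ≤ m := Nat.cast_nonneg m
  have h1 := vker_le A hA (y := (m:ℝ) + 1) (by positivity)
  have h2 := vker_le A hA (y := c) (lt_of_le_of_lt hm hc.1)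
  have h3 := vker_nonneg A ((m:ℝ) + 1)
  have h4 := vker_nonneg A c
  rw [h, abs_le]
  constructor <;> linarith

lemma dker_bound2 (A : ℝ) (hA : 1 ≤ A) (m : ℕ) :
    |dker A m| ≤ 12 * (1 / (((m : ℝ) + 1) * √((m : ℝ) + 1))) := by
  have hA0 : 0 < A := by linarith
  rcases Nat.eq_zero_or_pos m with h0 | h0
  · refine (dker_bound1 A hA0 m).trans ?_
    have : 1 ≤ √A := Real.one_le_sqrt.2 hA
    have : 1 / √A ≤ 1 := by rw [div_le_one (by linarith)]; exact this
    rw [h0]; norm_num; linarith [inv_le_one_of_one_le₀ (Real.one_le_sqrt.2 hA)]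
  · obtain ⟨c, hc, h⟩ := dker_eq A hA0 m
    have hm : (1:ℝ) ≤ m := by exact_mod_cast h0
    have hc1 : (m : ℝ) < c := hc.1
    have hc2 : c < (m : ℝ) + 1 := hc.2
    set C : ℝ := 12 * (1 / (((m : ℝ) + 1) * √((m : ℝ) + 1))) with hC
    have hC0 : 0 ≤ C := by positivity
    have key := (convex_Icc c ((m:ℝ) + 1)).norm_image_sub_le_of_norm_hasDerivWithin_le
      (f := vker A) (f' := fun y => (A / y - 1 / 2) * Real.exp (-A / y) / (y * √y)) (C := C)
      (x := c) (y := (m : ℝ) + 1)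
      (fun y hy => (hasDerivAt_vker A (by linarith [hy.1])).hasDerivWithinAt)
      (fun y hy => by
        have hy1 : c ≤ y := hy.1
        have hy0 : 0 < y := by linarith
        have hs : 0 < √y := Real.sqrt_pos.2 hy0
        have hu : 0 < A / y := by positivity
        have he : Real.exp (-A / y) = (Real.exp (A / y))⁻¹ := by rw [neg_div, Real.exp_neg]
        have h1 := Real.add_one_le_exp (A / y)
        have h2 : |(A / y - 1 / 2) * Real.exp (-A / y)| ≤ 1 := by
          rw [he, abs_mul, abs_of_pos (inv_pos.2 (Real.exp_pos _)), ← div_eq_mul_inv,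
            div_le_one (Real.exp_pos _), abs_le]
          constructor <;> linarith
        rw [Real.norm_eq_abs, abs_div, abs_of_pos (by positivity : 0 < y * √y)]
        have h3 : ((m : ℝ) + 1) / 4 ≤ y := by linarith
        have h4 : √((m : ℝ) + 1) / 2 ≤ √y := by
          have : √(((m : ℝ) + 1) / 4) = √((m : ℝ) + 1) / 2 := by
            rw [Real.sqrt_div (by positivity), show (4:ℝ) = 2 ^ 2 by norm_num,
              Real.sqrt_sq (by norm_num)]
          rw [← this]; exact Real.sqrt_le_sqrt h3
        have hsm : 0 < √((m : ℝ) + 1) := Real.sqrt_pos.2 (by positivity)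
        have h5 : ((m : ℝ) + 1) / 4 * (√((m : ℝ) + 1) / 2) ≤ y * √y := by gcongr
        calc _ ≤ 1 / (y * √y) := by gcongr
          _ ≤ 1 / (((m : ℝ) + 1) / 4 * (√((m : ℝ) + 1) / 2)) := by gcongr
          _ = 8 * (1 / (((m : ℝ) + 1) * √((m : ℝ) + 1))) := by field_simp; norm_num
          _ ≤ C := by rw [hC]; gcongr; norm_num)
      ⟨le_rfl, hc2.le⟩ ⟨hc2.le, le_rfl⟩
    rw [h]
    refine key.trans (mul_le_of_le_one_right hC0 ?_)
    rw [Real.norm_of_nonneg (by linarith)]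
    linarith

lemma summable_inv_mul_sqrt : Summable fun m : ℕ => 1 / (((m : ℝ) + 1) * √((m : ℝ) + 1)) := by
  refine (summable_succ_rpow (by norm_num : (1:ℝ) < 3 / 2)).congr fun m => ?_
  have h : (0:ℝ) < (m:ℝ) + 1 := by positivity
  rw [Real.rpow_neg h.le, one_div, Real.sqrt_eq_rpow]
  congr 1
  rw [show (3 / 2 : ℝ) = 1 + 1 / 2 by norm_num, Real.rpow_add h, Real.rpow_one]

lemma one_sub_exp_bound (A : ℝ) (hA : 0 ≤ A) {y : ℝ} (hy : 0 < y) :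
    0 ≤ 1 - Real.exp (-A / y) ∧ 1 - Real.exp (-A / y) ≤ A / y := by
  have h0 : 0 ≤ A / y := by positivity
  have h1 := Real.add_one_le_exp (-A / y)
  have h2 : Real.exp (-A / y) ≤ 1 := Real.exp_le_one_iff.2 (by rw [neg_div]; linarith)
  rw [neg_div] at h1 h2 ⊢
  constructor <;> linarith

lemma summable_q (A : ℝ) (hA : 0 ≤ A) :
    Summable fun m : ℕ => (1 - Real.exp (-A / ((m : ℝ) + 1))) / √((m : ℝ) + 1) := by
  refine Summable.of_nonneg_of_le (fun m => ?_) (fun m => ?_) (summable_inv_mul_sqrt.mul_left A)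
  · have := (one_sub_exp_bound A hA (y := (m:ℝ) + 1) (by positivity)).1
    positivity
  · have := (one_sub_exp_bound A hA (y := (m:ℝ) + 1) (by positivity)).2
    have hs : 0 < √((m:ℝ) + 1) := Real.sqrt_pos.2 (by positivity)
    calc _ ≤ (A / ((m:ℝ) + 1)) / √((m:ℝ) + 1) := by gcongr
      _ = _ := by field_simp

open Filter Topology MeasureTheory in
lemma q_eq (Z : ℝ) (hZ : Tendsto (fun N : ℕ => (∑ m ∈ Finset.range N, 1 / √((m : ℝ) + 1))
      - 2 * √(N : ℝ)) atTop (𝓝 Z)) (A : ℝ) (hA : 1 ≤ A) :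
    (∑' m : ℕ, (1 - Real.exp (-A / ((m : ℝ) + 1))) / √((m : ℝ) + 1)) - 2 * √(π * A) =
      Z - ∑' m, dker A m := by
  have hA0 : 0 < A := by linarith
  have hd : Summable (dker A) := Summable.of_norm_bounded (summable_inv_mul_sqrt.mul_left 12)
    (fun m => dker_bound2 A hA m)
  have h1 := (summable_q A hA0.le).hasSum.tendsto_sum_nat
  have h2 := hd.hasSum.tendsto_sum_nat
  have hnat : Tendsto (fun N : ℕ => (N : ℝ)) atTop atTop := tendsto_natCast_atTop_atTop
  have h3 : Tendsto (fun N : ℕ => 2 * √(N : ℝ) * (1 - Real.exp (-A / (N : ℝ)))) atTop (𝓝 0) := by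
    have h3 : Tendsto (fun N : ℕ => (2 * A) / √(N : ℝ)) atTop (𝓝 0) :=
      (Real.tendsto_sqrt_atTop.comp hnat).const_div_atTop (2 * A)
    refine squeeze_zero' ?_ ?_ h3
    · filter_upwards [eventually_gt_atTop 0] with N hN
      have hN' : (0 : ℝ) < N := by exact_mod_cast hN
      have := (one_sub_exp_bound A hA0.le hN').1
      positivity
    · filter_upwards [eventually_gt_atTop 0] with N hN
      have hN' : (0 : ℝ) < N := by exact_mod_cast hN
      have hs := Real.sqrt_pos.2 hN'
      have hs2 : √(N:ℝ) ^ 2 = N := Real.sq_sqrt hN'.le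
      calc _ ≤ 2 * √(N : ℝ) * (A / N) := by
            gcongr; exact (one_sub_exp_bound A hA0.le hN').2
        _ = 2 * √(N : ℝ) * (A / √(N:ℝ) ^ 2) := by rw [hs2]
        _ = _ := by field_simp
  have h4 : Tendsto (fun N : ℕ => ∫ s in (0:ℝ)..(N : ℝ), hker A s) atTop (𝓝 (√(π / A))) := by
    rw [← hker_integral A hA0]
    exact intervalIntegral_tendsto_integral_Ioi 0 (hker_integrableOn A hA0) hnat
  have e : 2 * A * √(π / A) = 2 * √(π * A) := by
    have : √(π * A) = A * √(π / A) := by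
      rw [show π * A = A ^ 2 * (π / A) by field_simp, Real.sqrt_mul (by positivity),
        Real.sqrt_sq hA0.le]
    rw [this]; ring
  have h5 := (hZ.sub h2).add (h3.add (h4.const_mul (2 * A)))
  rw [e] at h5
  have h6 : ∀ N : ℕ, ∑ m ∈ Finset.range N, (1 - Real.exp (-A / ((m : ℝ) + 1))) / √((m : ℝ) + 1)
      = (∑ m ∈ Finset.range N, 1 / √((m : ℝ) + 1)) - 2 * √(N : ℝ) -
        ∑ m ∈ Finset.range N, dker A m + (2 * √(N : ℝ) * (1 - Real.exp (-A / (N : ℝ))) +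
          2 * A * ∫ s in (0:ℝ)..(N : ℝ), hker A s) := by
    intro N
    have t := Finset.sum_range_sub (fun n : ℕ => Vker A (n : ℝ)) N
    have t0 : Vker A ((0:ℕ) : ℝ) = 0 := by simp [Vker]
    have t1 : ∑ m ∈ Finset.range N, dker A m = ∑ m ∈ Finset.range N, vker A ((m:ℝ) + 1) -
        Vker A (N : ℝ) := by
      rw [t0, sub_zero] at t
      rw [← t, ← Finset.sum_sub_distrib]
      refine Finset.sum_congr rfl fun m _ => ?_
      simp [dker]
    have t2 : ∑ m ∈ Finset.range N, (1 - Real.exp (-A / ((m : ℝ) + 1))) / √((m : ℝ) + 1) =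
        ∑ m ∈ Finset.range N, 1 / √((m : ℝ) + 1) - ∑ m ∈ Finset.range N, vker A ((m:ℝ) + 1) := by
      rw [← Finset.sum_sub_distrib]
      refine Finset.sum_congr rfl fun m _ => ?_
      simp [vker, sub_div]
    rw [t1, t2]
    unfold Vker
    ring
  have h7 := tendsto_nhds_unique h1 (h5.congr fun N => (h6 N).symm)
  rw [h7]; ring

open Filter Topology in
lemma C_limit (Z : ℝ) (hZ : Tendsto (fun N : ℕ => (∑ m ∈ Finset.range N, 1 / √((m : ℝ) + 1))
      - 2 * √(N : ℝ)) atTop (𝓝 Z)) :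
    Tendsto (fun A : ℝ => (∑' m : ℕ, (1 - Real.exp (-A / ((m : ℝ) + 1))) / √((m : ℝ) + 1))
      - 2 * √(π * A)) atTop (𝓝 Z) := by
  have h : Tendsto (fun A : ℝ => ∑' m, dker A m) atTop (𝓝 (∑' _ : ℕ, (0:ℝ))) := by
    refine tendsto_tsum_of_dominated_convergence (summable_inv_mul_sqrt.mul_left 12) ?_ ?_
    · intro m
      rw [tendsto_zero_iff_norm_tendsto_zero]
      refine squeeze_zero' (Eventually.of_forall fun _ => norm_nonneg _) ?_
        (Real.tendsto_sqrt_atTop.const_div_atTop 1)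
      filter_upwards [eventually_gt_atTop 0] with A hA
      exact dker_bound1 A hA m
    · filter_upwards [eventually_ge_atTop 1] with A hA m
      exact dker_bound2 A hA m
  rw [tsum_zero] at h
  have h2 := h.const_sub Z
  rw [sub_zero] at h2
  refine h2.congr' ?_
  filter_upwards [eventually_ge_atTop 1] with A hA
  exact (q_eq Z hZ A hA).symm

lemma antidiag_sum (φ : ℕ → ℝ) (n : ℕ) (hn : n ≠ 0) :
    ∑ p ∈ n.divisorsAntidiagonal, 1 / √(p.1 : ℝ) * φ (p.1 * p.2) =
      rsigma (1 / 2) n / √(n : ℝ) * φ n := by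
  rw [Nat.sum_divisorsAntidiagonal' (fun a b => 1 / √(a : ℝ) * φ (a * b)), rsigma,
    Finset.sum_div, Finset.sum_mul]
  refine Finset.sum_congr rfl fun d hd => ?_
  have hdv := Nat.dvd_of_mem_divisors hd
  have hd0 : 0 < d := Nat.pos_of_mem_divisors hd
  rw [Nat.div_mul_cancel hdv]
  congr 1
  have hd1 : (0:ℝ) < d := by exact_mod_cast hd0
  have hn1 : (0:ℝ) < n := by exact_mod_cast Nat.pos_of_ne_zero hn
  rw [Nat.cast_div hdv (by positivity), Real.sqrt_div hn1.le, ← Real.sqrt_eq_rpow]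
  field_simp

lemma divisor_summable (φ : ℕ → ℝ) (C : ℝ) (hφ : ∀ n : ℕ, 0 < n → |φ n| ≤ C / (n : ℝ) ^ 2) :
    Summable fun p : ℕ+ × ℕ+ => 1 / √((p.1 : ℕ) : ℝ) * φ (p.1 * p.2) := by
  have h0 : Summable fun n : ℕ+ => 1 / ((n : ℕ) : ℝ) ^ 2 :=
    (Real.summable_one_div_nat_pow.2 (by norm_num : 1 < 2)).comp_injective PNat.coe_injective
  have h1 := ((h0.mul_of_nonneg h0 (fun _ => by positivity) (fun _ => by positivity)).mul_left C)
  refine Summable.of_norm_bounded h1 fun p => ?_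
  have hp1 : (1:ℝ) ≤ ((p.1 : ℕ) : ℝ) := by exact_mod_cast p.1.2
  have hp2 : (1:ℝ) ≤ ((p.2 : ℕ) : ℝ) := by exact_mod_cast p.2.2
  have hs : 1 ≤ √((p.1 : ℕ) : ℝ) := by rw [Real.one_le_sqrt]; exact hp1
  have h2 := hφ (p.1 * p.2) (Nat.mul_pos p.1.2 p.2.2)
  rw [norm_mul, Real.norm_eq_abs, Real.norm_eq_abs, abs_of_nonneg (by positivity)]
  calc _ ≤ 1 * |φ (p.1 * p.2)| := by
        gcongr
        rw [div_le_one (by positivity)]; exact hs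
    _ ≤ C / (((p.1 * p.2 : ℕ)) : ℝ) ^ 2 := by rw [one_mul]; exact h2
    _ = _ := by push_cast; field_simp

lemma divisor_sum (φ : ℕ → ℝ) (C : ℝ) (hφ : ∀ n : ℕ, 0 < n → |φ n| ≤ C / (n : ℝ) ^ 2) :
    HasSum (fun k : ℕ => 1 / √((k : ℝ) + 1) * ∑' j : ℕ, φ ((k + 1) * (j + 1)))
      (∑' n : ℕ, rsigma (1 / 2) (n + 1) / √((n : ℝ) + 1) * φ (n + 1)) := by
  have hs := divisor_summable φ C hφ
  have h1 := (Equiv.summable_iff sigmaAntidiagonalEquivProd).2 hs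
  have e1 : ∑' p : ℕ+ × ℕ+, 1 / √((p.1 : ℕ) : ℝ) * φ (p.1 * p.2) =
      ∑' n : ℕ, rsigma (1 / 2) (n + 1) / √((n : ℝ) + 1) * φ (n + 1) := by
    rw [← Equiv.tsum_eq sigmaAntidiagonalEquivProd]
    refine (Summable.tsum_sigma h1).trans ?_
    have := tsum_pnat_eq_tsum_succ (f := fun n : ℕ => rsigma (1 / 2) n / √(n : ℝ) * φ n)
    push_cast at this
    rw [← this]
    refine tsum_congr fun n => ?_
    rw [← antidiag_sum φ n n.ne_zero, tsum_fintype, Finset.univ_eq_attach,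
      ← Finset.sum_attach (n : ℕ).divisorsAntidiagonal]
    rfl
  have h2 : Summable fun k : ℕ+ => ∑' j : ℕ+, 1 / √((k : ℕ) : ℝ) * φ (k * j) := hs.prod
  have e2 := hs.tsum_prod
  rw [e1] at e2
  have h3 := h2.hasSum
  rw [← e2] at h3
  have h4 := (Equiv.hasSum_iff Equiv.pnatEquivNat.symm).2 h3
  convert h4 using 1
  funext k
  have := tsum_pnat_eq_tsum_succ (f := fun j : ℕ => 1 / √((k : ℝ) + 1) * φ ((k + 1) * j))
  rw [← tsum_mul_left, ← this]
  simp [Equiv.pnatEquivNat]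

lemma coth_series (w : ℝ) (hw : 0 < w) :
    1 / (Real.exp (2 * π * w) - 1) = 1 / (2 * π * w) - 1 / 2 +
      1 / π * ∑' j : ℕ, w / (w ^ 2 + ((j : ℝ) + 1) ^ 2) := by
  have hz : (I * w : ℂ) ∈ Complex.integerComplement := by
    rintro ⟨n, hn⟩
    have := congrArg Complex.im hn
    simp at this
    exact hw.ne this
  have h := cot_series_rep' hz
  rw [Complex.cot_pi_eq_exp_ratio] at h
  have hI := Complex.I_mul_I
  have e1 : (2 * π * I * (I * w) : ℂ) = ((-(2 * π * w) : ℝ) : ℂ) := by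
    push_cast; linear_combination (2 * π * w) * hI
  rw [e1, ← Complex.ofReal_exp, Real.exp_neg] at h
  have e2 : ∀ j : ℕ, (1 / (I * w - (j + 1)) + 1 / (I * w + (j + 1)) : ℂ) =
      -2 * I * ((w / (w ^ 2 + ((j : ℝ) + 1) ^ 2) : ℝ) : ℂ) := by
    intro j
    have hp : ((w:ℂ) ^ 2 + ((j:ℂ) + 1) ^ 2) ≠ 0 := by
      have : 0 < w ^ 2 + ((j : ℝ) + 1) ^ 2 := by positivity
      exact_mod_cast this.ne'
    have hf : (I * w - (j + 1)) * (I * w + (j + 1)) = -((w:ℂ) ^ 2 + ((j:ℂ) + 1) ^ 2) := by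
      linear_combination (w:ℂ) ^ 2 * hI
    have hne : (I * w - (j + 1)) * (I * w + (j + 1)) ≠ (0:ℂ) := by
      rw [hf]; exact neg_ne_zero.2 hp
    have ha := left_ne_zero_of_mul hne
    have hb := right_ne_zero_of_mul hne
    rw [one_div_add_one_div ha hb, hf]
    push_cast
    field_simp
    ring
  simp_rw [e2] at h
  rw [tsum_mul_left, ← Complex.ofReal_tsum] at h
  set S := ∑' j : ℕ, w / (w ^ 2 + ((j : ℝ) + 1) ^ 2)
  have hE : 1 < Real.exp (2 * π * w) := Real.one_lt_exp_iff.2 (by positivity)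
  set E := Real.exp (2 * π * w)
  have hr : π * ((E + 1) / (E - 1)) - 1 / w = 2 * S := by
    have hE1 : ((E:ℂ) - 1) ≠ 0 := by
      have : E - 1 ≠ 0 := by linarith
      exact_mod_cast this
    have hE0 : (E:ℂ) ≠ 0 := by
      have : E ≠ 0 := by linarith
      exact_mod_cast this
    have hw0 : (w:ℂ) ≠ 0 := by exact_mod_cast hw.ne'
    have hc : (π * ((E + 1) / (E - 1)) - 1 / w : ℂ) = 2 * S := by
      have k1 : (((E⁻¹ : ℝ) : ℂ) + 1) / (I * (1 - ((E⁻¹ : ℝ) : ℂ))) = -I * ((E + 1) / (E - 1)) := by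
        push_cast
        have : (1 - (E:ℂ)⁻¹) = (E - 1) / E := by field_simp
        rw [this]
        have : ((E:ℂ)⁻¹ + 1) = (E + 1) / E := by field_simp; ring
        rw [this]
        field_simp
        rw [Complex.I_sq]; ring
      have k2 : (1 / (I * w) : ℂ) = -I * (1 / w) := by
        field_simp; rw [Complex.I_sq]; norm_num
      rw [k1, k2] at h
      have : I * (π * ((E + 1) / (E - 1)) - 1 / w : ℂ) = I * (2 * S) := by
        linear_combination -h
      exact mul_left_cancel₀ Complex.I_ne_zero this
    exact_mod_cast hc
  have hS : S = (π * ((E + 1) / (E - 1)) - 1 / w) / 2 := by linarith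
  have hE1 : E - 1 ≠ 0 := by linarith
  rw [hS]
  have := Real.pi_pos
  field_simp
  ring

lemma zeta_neg_half : riemannZeta (-1 / 2) =
    ((-(1 / (4 * π)) * ∑' m : ℕ, 1 / (((m : ℝ) + 1) * √((m : ℝ) + 1)) : ℝ) : ℂ) := by
  have h := riemannZeta_one_sub (s := 3 / 2) (fun n hn => by
    have := congrArg Complex.re hn
    simp at this
    have h0 : (0:ℝ) ≤ n := Nat.cast_nonneg n
    linarith) (by intro h; norm_num at h)
  have hz : riemannZeta (3 / 2) = ((∑' m : ℕ, 1 / (((m : ℝ) + 1) * √((m : ℝ) + 1)) : ℝ) : ℂ) := by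
    rw [zeta_eq_tsum_one_div_nat_add_one_cpow (by norm_num), Complex.ofReal_tsum]
    refine tsum_congr fun m => ?_
    have h : (0:ℝ) < (m:ℝ) + 1 := by positivity
    have : ((m:ℝ) + 1) * √((m:ℝ) + 1) = ((m:ℝ) + 1) ^ (3 / 2 : ℝ) := by
      rw [show (3 / 2 : ℝ) = 1 + 1 / 2 by norm_num, Real.rpow_add h, Real.rpow_one,
        Real.sqrt_eq_rpow]
    rw [this]
    push_cast
    rw [Complex.ofReal_cpow h.le]
    push_cast
    rfl
  have hG : Complex.Gamma (3 / 2) = ((√π / 2 : ℝ) : ℂ) := by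
    have := Complex.Gamma_add_one (1 / 2) (by norm_num)
    rw [show (1 / 2 + 1 : ℂ) = 3 / 2 by norm_num, Complex.Gamma_one_half_eq] at this
    rw [this, Real.sqrt_eq_rpow]
    push_cast
    rw [Complex.ofReal_cpow Real.pi_pos.le]
    push_cast; ring
  have hc : Complex.cos (π * (3 / 2) / 2) = ((-(√2 / 2) : ℝ) : ℂ) := by
    have : Real.cos (π * (3 / 2) / 2) = -(√2 / 2) := by
      rw [show π * (3 / 2) / 2 = π - π / 4 by ring, Real.cos_pi_sub, Real.cos_pi_div_four]
    rw [← this]; push_cast; rfl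
  have hp : (2 * π : ℂ) ^ (-(3 / 2) : ℂ) = ((1 / (2 * π * (√2 * √π)) : ℝ) : ℂ) := by
    have : (2 * π) ^ (-(3 / 2) : ℝ) = 1 / (2 * π * (√2 * √π)) := by
      have h : 0 < 2 * π := by positivity
      rw [Real.rpow_neg h.le, show (3 / 2 : ℝ) = 1 + 1 / 2 by norm_num, Real.rpow_add h,
        Real.rpow_one, ← Real.sqrt_eq_rpow, Real.sqrt_mul (by norm_num), one_div]
    rw [← this, Complex.ofReal_cpow (by positivity)]
    push_cast; rfl
  rw [show (1 - 3 / 2 : ℂ) = -1 / 2 by norm_num, hz, hG, hc, hp] at h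
  rw [h]
  have h2 : (0:ℝ) < √2 := by positivity
  have h3 : (0:ℝ) < √π := by positivity
  have := Real.pi_pos
  generalize (∑' m : ℕ, 1 / (((m : ℝ) + 1) * √((m : ℝ) + 1))) = S
  norm_cast
  push_cast
  field_simp
  ring

noncomputable def bker (a : ℝ) (m : ℕ) : ℝ :=
  1 / (Real.exp (a / ((m : ℝ) + 1)) - 1) - ((m : ℝ) + 1) / a

lemma bker_bound (a : ℝ) (ha : 0 < a) (m : ℕ) : |bker a m| ≤ 1 := by
  have hm : (0:ℝ) < (m:ℝ) + 1 := by positivity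
  set u := a / ((m:ℝ) + 1) with hu
  have hu0 : 0 < u := by positivity
  have e : ((m:ℝ) + 1) / a = 1 / u := by rw [hu, one_div_div]
  have h1 := Real.add_one_le_exp u
  have h2 := Real.add_one_le_exp (-u)
  rw [Real.exp_neg] at h2
  have hE : 0 < Real.exp u - 1 := by linarith
  rw [bker, e, abs_le]
  constructor
  · have : 1 / u ≤ 1 / (1 - (Real.exp u)⁻¹) := by
      apply one_div_le_one_div_of_le _ (by linarith)
      rw [sub_pos]; exact inv_lt_one_of_one_lt₀ (by linarith)
    have e2 : 1 / (1 - (Real.exp u)⁻¹) = 1 + 1 / (Real.exp u - 1) := by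
      have : 1 - (Real.exp u)⁻¹ = (Real.exp u - 1) / Real.exp u := by field_simp
      rw [this, one_div_div]; field_simp; ring
    linarith
  · have : 1 / (Real.exp u - 1) ≤ 1 / u := one_div_le_one_div_of_le hu0 (by linarith)
    linarith

lemma geom_hker (a : ℝ) (ha : 0 < a) (K m : ℕ) :
    ∑ k ∈ Finset.range K, hker (a * ((k : ℝ) + 1)) ((m : ℝ) + 1) =
      1 / a * ((1 - Real.exp (-(a * K) / ((m : ℝ) + 1))) / √((m : ℝ) + 1)) +
      bker a m / (((m : ℝ) + 1) * √((m : ℝ) + 1)) *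
        (1 - Real.exp (-(a * K) / ((m : ℝ) + 1))) := by
  have hm : (0:ℝ) < (m:ℝ) + 1 := by positivity
  have hs : 0 < √((m:ℝ) + 1) := Real.sqrt_pos.2 hm
  have hE : 0 < Real.exp (a / ((m:ℝ) + 1)) - 1 := by
    have : 0 < a / ((m:ℝ) + 1) := by positivity
    linarith [Real.add_one_le_exp (a / ((m:ℝ) + 1))]
  have e0 : 1 / a * ((1 - Real.exp (-(a * K) / ((m : ℝ) + 1))) / √((m : ℝ) + 1)) +
      bker a m / (((m : ℝ) + 1) * √((m : ℝ) + 1)) *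
        (1 - Real.exp (-(a * K) / ((m : ℝ) + 1))) =
      (1 - Real.exp (-(a * K) / ((m : ℝ) + 1))) / (Real.exp (a / ((m:ℝ) + 1)) - 1) /
        (((m : ℝ) + 1) * √((m : ℝ) + 1)) := by
    rw [bker]; field_simp; ring
  rw [e0]
  clear e0
  induction K with
  | zero => simp
  | succ K ih =>
    rw [Finset.sum_range_succ, ih, hker]
    have e1 : Real.exp (-(a * (K:ℝ)) / ((m : ℝ) + 1)) =
        Real.exp (a / ((m:ℝ) + 1)) * Real.exp (-(a * ((K:ℝ) + 1)) / ((m : ℝ) + 1)) := by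
      rw [← Real.exp_add]; congr 1; field_simp; ring
    push_cast
    rw [e1]
    field_simp
    ring

open Filter Topology in
lemma summable_b (a : ℝ) (ha : 0 < a) :
    Summable fun m : ℕ => bker a m / (((m : ℝ) + 1) * √((m : ℝ) + 1)) := by
  refine Summable.of_norm_bounded summable_inv_mul_sqrt fun m => ?_
  rw [norm_div, Real.norm_eq_abs, Real.norm_eq_abs, abs_of_pos (by positivity :
    (0:ℝ) < ((m : ℝ) + 1) * √((m : ℝ) + 1))]
  gcongr
  exact bker_bound a ha m

lemma b_term_bound (a : ℝ) (ha : 0 < a) (K m : ℕ) :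
    ‖bker a m / (((m : ℝ) + 1) * √((m : ℝ) + 1)) *
        (1 - Real.exp (-(a * K) / ((m : ℝ) + 1)))‖ ≤ 1 / (((m : ℝ) + 1) * √((m : ℝ) + 1)) := by
  have h1 := (one_sub_exp_bound (a * K) (by positivity) (y := (m:ℝ) + 1) (by positivity)).1
  have h2 := Real.exp_pos (-(a * K) / ((m : ℝ) + 1))
  rw [norm_mul, norm_div, Real.norm_eq_abs, Real.norm_eq_abs, abs_of_pos (by positivity :
    (0:ℝ) < ((m : ℝ) + 1) * √((m : ℝ) + 1)), Real.norm_of_nonneg h1]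
  have h3 := bker_bound a ha m
  calc _ ≤ 1 / (((m : ℝ) + 1) * √((m : ℝ) + 1)) * 1 := by
        gcongr; linarith
    _ = _ := mul_one _

open Filter Topology in
lemma partial_H (a : ℝ) (ha : 0 < a) (K : ℕ) :
    ∑ k ∈ Finset.range K, ∑' m : ℕ, hker (a * ((k : ℝ) + 1)) ((m : ℝ) + 1) =
      1 / a * (∑' m : ℕ, (1 - Real.exp (-(a * K) / ((m : ℝ) + 1))) / √((m : ℝ) + 1)) +
      ∑' m : ℕ, bker a m / (((m : ℝ) + 1) * √((m : ℝ) + 1)) *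
        (1 - Real.exp (-(a * K) / ((m : ℝ) + 1))) := by
  rw [← Summable.tsum_finsetSum (fun (k : ℕ) _ => hker_summable (a * ((k:ℝ) + 1)) (by positivity))]
  rw [← tsum_mul_left, ← Summable.tsum_add]
  · exact tsum_congr fun m => geom_hker a ha K m
  · exact (summable_q (a * K) (by positivity)).mul_left _
  · exact Summable.of_norm_bounded summable_inv_mul_sqrt fun m => b_term_bound a ha K m

open Filter Topology in
lemma b_limit (a : ℝ) (ha : 0 < a) :
    Tendsto (fun K : ℕ => ∑' m : ℕ, bker a m / (((m : ℝ) + 1) * √((m : ℝ) + 1)) *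
        (1 - Real.exp (-(a * K) / ((m : ℝ) + 1)))) atTop
      (𝓝 (∑' m : ℕ, bker a m / (((m : ℝ) + 1) * √((m : ℝ) + 1)))) := by
  refine tendsto_tsum_of_dominated_convergence summable_inv_mul_sqrt (fun m => ?_)
    (Eventually.of_forall fun K m => b_term_bound a ha K m)
  have hm : (0:ℝ) < (m:ℝ) + 1 := by positivity
  have h1 : Tendsto (fun K : ℕ => a / ((m:ℝ) + 1) * (K:ℝ)) atTop atTop :=
    tendsto_natCast_atTop_atTop.const_mul_atTop (by positivity)
  have h2 := (Real.tendsto_exp_neg_atTop_nhds_zero.comp h1).const_sub 1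
  have h3 := h2.const_mul (bker a m / (((m : ℝ) + 1) * √((m : ℝ) + 1)))
  rw [sub_zero, mul_one] at h3
  refine h3.congr fun K => ?_
  simp only [Function.comp]
  congr 4
  field_simp

lemma b_sum (x : ℝ) (hx : 0 < x) :
    ∑' m : ℕ, bker (2 * π * x) m / (((m : ℝ) + 1) * √((m : ℝ) + 1)) =
      -(1 / 2) * (∑' m : ℕ, 1 / (((m : ℝ) + 1) * √((m : ℝ) + 1))) +
      x / π * ∑' n : ℕ, rsigma (1 / 2) (n + 1) / √((n : ℝ) + 1) *
        (1 / (x ^ 2 + ((n : ℝ) + 1) ^ 2)) := by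
  have hd := divisor_sum (fun n : ℕ => 1 / (x ^ 2 + (n : ℝ) ^ 2)) 1 (fun n hn => by
    have : (0:ℝ) < n := by exact_mod_cast hn
    rw [abs_of_pos (by positivity)]
    gcongr
    nlinarith [sq_nonneg x])
  push_cast at hd
  have h := (summable_inv_mul_sqrt.hasSum.mul_left (-(1/2))).add (hd.mul_left (x / π))
  rw [← h.tsum_eq]
  refine tsum_congr fun m => ?_
  have hm : (0:ℝ) < (m:ℝ) + 1 := by positivity
  have hs : 0 < √((m:ℝ) + 1) := Real.sqrt_pos.2 hm
  have hc := coth_series (x / ((m:ℝ) + 1)) (by positivity)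
  have e : ∀ j : ℕ, x / ((m:ℝ) + 1) / ((x / ((m:ℝ) + 1)) ^ 2 + ((j : ℝ) + 1) ^ 2) =
      x * ((m:ℝ) + 1) * (1 / (x ^ 2 + (((m:ℝ) + 1) * ((j:ℝ) + 1)) ^ 2)) := by
    intro j
    field_simp
  simp_rw [e] at hc
  rw [tsum_mul_left, show 2 * π * (x / ((m:ℝ) + 1)) = 2 * π * x / ((m:ℝ) + 1) by ring] at hc
  rw [bker, hc]
  generalize (∑' j : ℕ, 1 / (x ^ 2 + (((m:ℝ) + 1) * ((j:ℝ) + 1)) ^ 2)) = S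
  have := Real.pi_pos
  field_simp
  ring

open Filter Topology in
lemma lhs_eq (x : ℝ) (hx : 0 < x) (Z : ℝ)
    (hZ : Tendsto (fun N : ℕ => (∑ m ∈ Finset.range N, 1 / √((m : ℝ) + 1))
      - 2 * √(N : ℝ)) atTop (𝓝 Z)) :
    ∑' n : ℕ, rsigma (1 / 2) (n + 1) / √((n : ℝ) + 1) *
      (Real.exp (-(2 * π * √(2 * ((n : ℝ) + 1) * x))) * Real.cos (2 * π * √(2 * ((n : ℝ) + 1) * x)))
    = √(x / 2) / (2 * π * x) * Z +
      √(x / 2) * (∑' m : ℕ, bker (2 * π * x) m / (((m : ℝ) + 1) * √((m : ℝ) + 1))) - 1 / 2 * Z := by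
  have hpi := Real.pi_pos
  set c := 2 * π * √(2 * x) with hc
  have hc0 : 0 < c := by positivity
  have hd := divisor_sum (fun n : ℕ => Real.exp (-(2 * π * √(2 * (n : ℝ) * x))) *
      Real.cos (2 * π * √(2 * (n : ℝ) * x))) (24 / c ^ 4) (fun n hn => by
    have hn' : (0:ℝ) < n := by exact_mod_cast hn
    have e : 2 * π * √(2 * (n : ℝ) * x) = c * √(n:ℝ) := by
      rw [hc, show 2 * (n:ℝ) * x = (2 * x) * n by ring, Real.sqrt_mul (by positivity)]; ring
    rw [e, abs_mul, Real.abs_exp]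
    calc _ ≤ Real.exp (-(c * √(n:ℝ))) * 1 := by
          gcongr; exact Real.abs_cos_le_one _
      _ ≤ _ := by
          rw [mul_one]
          refine (exp_sqrt_bound c n hc0 hn').trans (le_of_eq ?_)
          field_simp)
  push_cast at hd
  have hsx : 0 < √(x / 2) := Real.sqrt_pos.2 (by positivity)
  have hterm : ∀ k : ℕ, 1 / √((k : ℝ) + 1) * ∑' j : ℕ,
      (Real.exp (-(2 * π * √(2 * (((k : ℝ) + 1) * ((j : ℝ) + 1)) * x))) *
        Real.cos (2 * π * √(2 * (((k : ℝ) + 1) * ((j : ℝ) + 1)) * x))) =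
      √(x / 2) * (∑' m : ℕ, hker (2 * π * x * ((k : ℝ) + 1)) ((m : ℝ) + 1)) -
        1 / 2 * (1 / √((k : ℝ) + 1)) := by
    intro k
    have hk : (0:ℝ) < (k:ℝ) + 1 := by positivity
    have hs : 0 < √((k:ℝ) + 1) := Real.sqrt_pos.2 hk
    have hp := poisson_h (2 * π * x * ((k:ℝ) + 1)) (by positivity)
    have e : ∀ j : ℕ, 2 * √(π * (2 * π * x * ((k:ℝ) + 1)) * ((j:ℝ) + 1)) =
        2 * π * √(2 * (((k : ℝ) + 1) * ((j : ℝ) + 1)) * x) := by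
      intro j
      rw [show π * (2 * π * x * ((k:ℝ) + 1)) * ((j:ℝ) + 1) =
        π ^ 2 * (2 * (((k : ℝ) + 1) * ((j : ℝ) + 1)) * x) by ring,
        Real.sqrt_mul (by positivity), Real.sqrt_sq hpi.le]
      ring
    simp_rw [e] at hp
    have e2 : √(x / 2) * √(π / (2 * π * x * ((k:ℝ) + 1))) = 1 / 2 * (1 / √((k:ℝ) + 1)) := by
      rw [← Real.sqrt_mul (by positivity), show x / 2 * (π / (2 * π * x * ((k:ℝ) + 1))) =
        (1 / 2) ^ 2 / ((k:ℝ) + 1) by field_simp, Real.sqrt_div (by positivity),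
        Real.sqrt_sq (by norm_num)]
      ring
    rw [hp, ← mul_assoc, e2]
    ring
  have hd2 := hd.tendsto_sum_nat
  have ha : 0 < 2 * π * x := by positivity
  have hC := (C_limit Z hZ).comp (tendsto_natCast_atTop_atTop.const_mul_atTop ha)
  have hlim := ((hC.const_mul (√(x / 2) / (2 * π * x))).add
    ((b_limit (2 * π * x) ha).const_mul √(x / 2))).sub (hZ.const_mul (1 / 2))
  refine tendsto_nhds_unique hd2 (hlim.congr fun K => ?_)
  rw [Finset.sum_congr rfl fun k _ => hterm k, Finset.sum_sub_distrib, ← Finset.mul_sum,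
    ← Finset.mul_sum, partial_H _ ha]
  simp only [Function.comp]
  have e3 : √(x / 2) / (2 * π * x) * (2 * √(π * (2 * π * x * (K:ℝ)))) = √(K:ℝ) := by
    have : √(π * (2 * π * x * (K:ℝ))) = 2 * π * √(x / 2) * √(K:ℝ) := by
      rw [show π * (2 * π * x * (K:ℝ)) = (2 * π) ^ 2 * (x / 2) * K by ring,
        Real.sqrt_mul (by positivity), Real.sqrt_mul (by positivity), Real.sqrt_sq (by positivity)]
    rw [this]
    have h2 : √(x / 2) ^ 2 = x / 2 := Real.sq_sqrt (by positivity)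
    field_simp
    rw [h2]; field_simp
  linear_combination (-1) * e3

theorem corollary_half_cos (x : ℝ) (hx : 0 < x) (hxint : ∀ k : ℤ, x ≠ (k : ℝ)) :
    (∑' n : ℕ, ((rsigma (1 / 2) (n + 1) / Real.sqrt ((n : ℝ) + 1) *
        Real.exp (-(2 * π * Real.sqrt (2 * ((n : ℝ) + 1) * x))) *
        Real.cos (2 * π * Real.sqrt (2 * ((n : ℝ) + 1) * x)) : ℝ) : ℂ))
    = ((1 / (2 * π * Real.sqrt (2 * x)) - 1 / 2 : ℝ) : ℂ) * riemannZeta (1 / 2)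
      + ((π * Real.sqrt (2 * x) : ℝ) : ℂ) * riemannZeta (-1 / 2)
      + ((x ^ (3 / 2 : ℝ) / (π * Real.sqrt 2) : ℝ) : ℂ) *
        ∑' n : ℕ, ((rsigma (1 / 2) (n + 1) /
          (Real.sqrt ((n : ℝ) + 1) * (x ^ 2 + ((n : ℝ) + 1) ^ 2)) : ℝ) : ℂ) := by
  obtain ⟨Z, hZ1, hZ⟩ := zeta_half_limit
  have h := lhs_eq x hx Z hZ
  rw [b_sum x hx] at h
  have e1 : ∀ n : ℕ, rsigma (1 / 2) (n + 1) / √((n : ℝ) + 1) *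
      (1 / (x ^ 2 + ((n : ℝ) + 1) ^ 2)) = rsigma (1 / 2) (n + 1) /
          (√((n : ℝ) + 1) * (x ^ 2 + ((n : ℝ) + 1) ^ 2)) := fun n => by
    rw [div_mul_div_comm, mul_one]
  simp_rw [e1, ← mul_assoc] at h
  rw [hZ1, zeta_neg_half, ← Complex.ofReal_tsum, ← Complex.ofReal_tsum, h]
  have hpi := Real.pi_pos
  generalize (∑' m : ℕ, 1 / (((m : ℝ) + 1) * √((m : ℝ) + 1))) = S
  generalize (∑' n : ℕ, rsigma (1 / 2) (n + 1) /
          (√((n : ℝ) + 1) * (x ^ 2 + ((n : ℝ) + 1) ^ 2))) = T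
  norm_cast
  have hs2 : 0 < √(2:ℝ) := by positivity
  have hsx : 0 < √x := Real.sqrt_pos.2 hx
  have q2 : √(2:ℝ) ^ 2 = 2 := Real.sq_sqrt (by norm_num)
  have qx : √x ^ 2 = x := Real.sq_sqrt hx.le
  have r : x ^ (3 / 2 : ℝ) = x * √x := by
    rw [show (3 / 2 : ℝ) = 1 + 1 / 2 by norm_num, Real.rpow_add hx, Real.rpow_one,
      Real.sqrt_eq_rpow]
  rw [r, Real.sqrt_div hx.le, Real.sqrt_mul (by norm_num)]
  have a1 : √x / √2 / (2 * π * x) = 1 / (2 * π * (√2 * √x)) := by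
    rw [← qx, Real.sqrt_sq hsx.le]; field_simp
  have a2 : √x / √2 = √2 * √x / 2 := by
    field_simp; rw [q2]
  have a3 : √x / √2 * (x / π) = x * √x / (π * √2) := by field_simp
  have a4 : √x / √2 * (-(1 / 2) * S) = π * (√2 * √x) * (-(1 / (4 * π)) * S) := by
    rw [a2]; field_simp; ring
  linear_combination Z * a1 + T * a3 + a4
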